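/- arXiv:2211.14188 — 4 statements merged into one kernel-verified Lean document; each statement's English description precedes it below -/
import Mathlib

section
/- Let q ∈ (1,2], let p = q/(q−1) be its Hölder conjugate, and let α > 0. Define the probability measure ν on ℝ³ by dν = Z⁻¹ e^{−α N^p} dx, where N is the Kaplan norm and Z = ∫_{ℝ³} e^{−α N^p} dx ∈ (0,∞). Then there exists a constant C ∈ (0,∞) such that for every locally Lipschitz f : ℝ³ → ℝ with ∫ |∇f|^q dν < ∞ one has ∫ |f − ∫ f dν|^q dν ≤ C ∫ |∇f|^q dν (the q-spectral gap inequality). -/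
open MeasureTheory Filter
open scoped ENNReal

noncomputable section

/-- The underlying space `ℝ³` of the Heisenberg group. -/
abbrev Spin3 : Type := Fin 3 → ℝ

/-- The Heisenberg vector field `X¹ = ∂₁ + 2x₂∂₃` applied to `f` at `x`. -/
def X1 (f : Spin3 → ℝ) (x : Spin3) : ℝ :=
  fderiv ℝ f x (Pi.single 0 1) + 2 * x 1 * fderiv ℝ f x (Pi.single 2 1)

/-- The Heisenberg vector field `X² = ∂₂ − 2x₁∂₃` applied to `f` at `x`. -/
def X2 (f : Spin3 → ℝ) (x : Spin3) : ℝ :=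
  fderiv ℝ f x (Pi.single 1 1) - 2 * x 0 * fderiv ℝ f x (Pi.single 2 1)

/-- The length `|∇f|` of the Heisenberg sub-gradient `∇f = (X¹f, X²f)`. -/
def hGrad (f : Spin3 → ℝ) (x : Spin3) : ℝ := Real.sqrt (X1 f x ^ 2 + X2 f x ^ 2)

/-- The Kaplan norm `N(x) = ((x₁²+x₂²)² + 16x₃²)^{1/4}` on the Heisenberg group. -/
def kaplan (x : Spin3) : ℝ := ((x 0 ^ 2 + x 1 ^ 2) ^ 2 + 16 * x 2 ^ 2) ^ ((1 : ℝ) / 4)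

/-- The normalised measure `ν = Z⁻¹ e^{−α N^p} dx` on `ℝ³`. -/
def nuKaplan (α p Z : ℝ) : Measure Spin3 :=
  (ENNReal.ofReal Z)⁻¹ •
    volume.withDensity fun x => ENNReal.ofReal (Real.exp (-(α * kaplan x ^ p)))


def tr (a b c : ℝ) (x : Spin3) : Spin3 :=
  ![x 0 + a, x 1 + b, x 2 + c - 2 * (x 0 * b - x 1 * a)]

def ph (u0 u1 w0 w1 s : ℝ) (x : Spin3) : Spin3 :=
  tr (s * u0 + s ^ 2 * w0) (s * u1 + s ^ 2 * w1) (-(2 / 3) * s ^ 3 * (u0 * w1 - u1 * w0)) x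

lemma mp_affine (M : Matrix (Fin 3) (Fin 3) ℝ) (hM : M.det = 1) (b : Spin3) :
    MeasurePreserving (fun x : Spin3 => Matrix.toLin' M x + b) volume volume := by
  have h1 : MeasurePreserving (Matrix.toLin' M) volume volume := by
    refine ⟨(Matrix.toLin' M).continuous_of_finiteDimensional.measurable, ?_⟩
    rw [Real.map_matrix_volume_pi_eq_smul_volume_pi (by rw [hM]; norm_num), hM]
    simp
  exact (measurePreserving_add_right volume b).comp h1

lemma mp_tr (a b c : ℝ) : MeasurePreserving (tr a b c) volume volume := by
  convert mp_affine !![1, 0, 0; 0, 1, 0; -2 * b, 2 * a, 1] ?_ ![a, b, c] using 1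
  · funext x
    ext i
    fin_cases i <;> simp [tr, Matrix.toLin'_apply, dotProduct, Fin.sum_univ_three]
    ring
  · simp [Matrix.det_fin_three]

lemma mp_tr' (x : Spin3) :
    MeasurePreserving (fun g : Spin3 => tr (g 0) (g 1) (g 2) x) volume volume := by
  convert mp_affine !![1, 0, 0; 0, 1, 0; 2 * x 1, -2 * x 0, 1] ?_ x using 1
  · funext g
    ext i
    fin_cases i <;> simp [tr, Matrix.toLin'_apply, dotProduct, Fin.sum_univ_three]
    · ring
    · ring
    · ring
  · simp [Matrix.det_fin_three]

lemma mp_ph (u0 u1 w0 w1 s : ℝ) : MeasurePreserving (ph u0 u1 w0 w1 s) volume volume :=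
  mp_tr _ _ _

lemma continuous_ph (u0 u1 w0 w1 : ℝ) :
    Continuous (fun z : ℝ × Spin3 => ph u0 u1 w0 w1 z.1 z.2) := by
  unfold ph tr
  refine continuous_pi fun i => ?_
  fin_cases i <;> simp <;> fun_prop

lemma hasDerivAt_ph (u0 u1 w0 w1 s : ℝ) (x : Spin3) :
    HasDerivAt (fun s => ph u0 u1 w0 w1 s x)
      ((u0 + 2 * s * w0) • (Pi.single 0 1 + (2 * ph u0 u1 w0 w1 s x 1) • Pi.single 2 1 : Spin3) +
       (u1 + 2 * s * w1) • (Pi.single 1 1 - (2 * ph u0 u1 w0 w1 s x 0) • Pi.single 2 1 : Spin3)) s := by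
  have hA : ∀ u w : ℝ, HasDerivAt (fun s : ℝ => s * u + s ^ 2 * w) (u + 2 * s * w) s := by
    intro u w
    convert! ((hasDerivAt_id s).mul_const u).add (((hasDerivAt_id s).pow 2).mul_const w) using 1
    simp
  have hC : ∀ k : ℝ, HasDerivAt (fun s : ℝ => -(2 / 3) * s ^ 3 * k) (-2 * s ^ 2 * k) s := by
    intro k
    convert! ((((hasDerivAt_id s).pow 3).const_mul (-(2 / 3))).mul_const k) using 1
    simp
    left
    ring
  rw [hasDerivAt_pi]
  intro i
  fin_cases i
  · simpa [ph, tr] using (hA u0 w0)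
  · simpa [ph, tr] using (hA u1 w1)
  · have := (((hC (u0 * w1 - u1 * w0)).const_add (x 2)).sub
      ((((hA u1 w1).const_mul (x 0)).sub ((hA u0 w0).const_mul (x 1))).const_mul 2))
    convert! this using 1
    simp [ph, tr]
    ring

lemma locLip_ph (u0 u1 w0 w1 : ℝ) (x : Spin3) : LocallyLipschitz (fun s => ph u0 u1 w0 w1 s x) := by
  apply ContDiff.locallyLipschitz (𝕂 := ℝ)
  unfold ph tr
  rw [contDiff_pi]
  intro i
  fin_cases i <;> simp <;> fun_prop

lemma ae_diff {f : Spin3 → ℝ} (hf : LocallyLipschitz f) : ∀ᵐ x, DifferentiableAt ℝ f x := by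
  have h : ∀ n : ℕ, ∀ᵐ x : Spin3, x ∈ Metric.ball (0 : Spin3) n → DifferentiableAt ℝ f x := by
    intro n
    obtain ⟨K, hK⟩ := (hf.locallyLipschitzOn (s := Metric.closedBall (0 : Spin3) n)).exists_lipschitzOnWith_of_compact
      (isCompact_closedBall _ _)
    filter_upwards [(hK.mono Metric.ball_subset_closedBall).ae_differentiableWithinAt_of_mem (μ := volume)] with x hx hxs
    exact (hx hxs).differentiableAt (Metric.isOpen_ball.mem_nhds hxs)
  filter_upwards [ae_all_iff.2 h] with x hx
  obtain ⟨n, hn⟩ := exists_nat_gt (dist x 0)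
  exact hx n hn

lemma measurable_hGrad (f : Spin3 → ℝ) : Measurable (hGrad f) := by
  unfold hGrad X1 X2
  have := fun y => measurable_fderiv_apply_const ℝ f y
  fun_prop

lemma hGrad_nonneg (f : Spin3 → ℝ) (x) : 0 ≤ hGrad f x := Real.sqrt_nonneg _

lemma deriv_bound {f : Spin3 → ℝ} (u0 u1 w0 w1 s M : ℝ) (x : Spin3)
    (hM : (u0 + 2 * s * w0) ^ 2 + (u1 + 2 * s * w1) ^ 2 ≤ M ^ 2) (hM0 : 0 ≤ M)
    (hd : DifferentiableAt ℝ f (ph u0 u1 w0 w1 s x)) :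
    |deriv (fun s => f (ph u0 u1 w0 w1 s x)) s| ≤ M * hGrad f (ph u0 u1 w0 w1 s x) := by
  have h := (hd.hasFDerivAt.comp_hasDerivAt s (hasDerivAt_ph u0 u1 w0 w1 s x)).deriv
  simp only [Function.comp_def] at h
  rw [h]
  set y := ph u0 u1 w0 w1 s x
  have : fderiv ℝ f y ((u0 + 2 * s * w0) • (Pi.single 0 1 + (2 * y 1) • Pi.single 2 1 : Spin3) +
       (u1 + 2 * s * w1) • (Pi.single 1 1 - (2 * y 0) • Pi.single 2 1 : Spin3)) =
       (u0 + 2 * s * w0) * X1 f y + (u1 + 2 * s * w1) * X2 f y := by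
    simp only [map_add, map_sub, map_smul, X1, X2, smul_eq_mul]
  rw [this]
  apply abs_le_of_sq_le_sq _ (mul_nonneg hM0 (hGrad_nonneg _ _))
  rw [mul_pow, hGrad, Real.sq_sqrt (by positivity)]
  have h2 : 0 ≤ X1 f y ^ 2 + X2 f y ^ 2 := by positivity
  nlinarith [mul_le_mul_of_nonneg_right hM h2, sq_nonneg ((u0 + 2 * s * w0) * X2 f y - (u1 + 2 * s * w1) * X1 f y)]

lemma jensen {Ω : Type*} [MeasurableSpace Ω] (μ : Measure Ω) [IsProbabilityMeasure μ] {q : ℝ} (hq : 1 < q)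
    {g : Ω → ℝ≥0∞} (hg : AEMeasurable g μ) : (∫⁻ x, g x ∂μ) ^ q ≤ ∫⁻ x, g x ^ q ∂μ := by
  have h := ENNReal.lintegral_mul_le_Lp_mul_Lq μ (Real.HolderConjugate.conjExponent hq) hg
    (aemeasurable_const (b := (1 : ℝ≥0∞)))
  simp only [Pi.mul_apply, mul_one, ENNReal.one_rpow, lintegral_const, measure_univ] at h
  calc (∫⁻ x, g x ∂μ) ^ q ≤ ((∫⁻ x, g x ^ q ∂μ) ^ (1 / q)) ^ q :=
        ENNReal.rpow_le_rpow h (by linarith)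
    _ = _ := by
        rw [← ENNReal.rpow_mul, one_div_mul_cancel (by linarith), ENNReal.rpow_one]

lemma ofReal_rpow_abs (y q : ℝ) (hq : 0 ≤ q) : ENNReal.ofReal (|y| ^ q) = ‖y‖ₑ ^ q := by
  rw [← ENNReal.ofReal_rpow_of_nonneg (abs_nonneg _) hq, Real.enorm_eq_ofReal_abs]

lemma path_ineq {f : Spin3 → ℝ} (hf : LocallyLipschitz f) {q : ℝ} (hq : 1 < q) (u0 u1 w0 w1 M : ℝ)
    (x : Spin3) (hM : ∀ s ∈ Set.Icc (0 : ℝ) 1, (u0 + 2 * s * w0) ^ 2 + (u1 + 2 * s * w1) ^ 2 ≤ M ^ 2)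
    (hM0 : 0 ≤ M)
    (hd : ∀ᵐ s ∂(volume.restrict (Set.Icc (0 : ℝ) 1)), DifferentiableAt ℝ f (ph u0 u1 w0 w1 s x)) :
    ENNReal.ofReal (|f x - f (ph u0 u1 w0 w1 1 x)| ^ q) ≤
      ∫⁻ s in Set.Icc (0 : ℝ) 1, ENNReal.ofReal ((M * hGrad f (ph u0 u1 w0 w1 s x)) ^ q) := by
  set φ : ℝ → ℝ := fun s => f (ph u0 u1 w0 w1 s x) with hφ
  have hφL : LocallyLipschitz φ := hf.comp (locLip_ph u0 u1 w0 w1 x)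
  obtain ⟨K, hK⟩ := (hφL.locallyLipschitzOn (s := Set.uIcc (0 : ℝ) 1)).exists_lipschitzOnWith_of_compact
      isCompact_uIcc
  have hint := hK.absolutelyContinuousOnInterval.integral_deriv_eq_sub
  rw [intervalIntegral.integral_of_le zero_le_one, ← integral_Icc_eq_integral_Ioc] at hint
  have h0 : φ 0 = f x := by
    simp only [hφ]
    congr 1
    ext i
    fin_cases i <;> simp [ph, tr]
  have : IsProbabilityMeasure (volume.restrict (Set.Icc (0 : ℝ) 1)) := ⟨by simp⟩
  have h1 : f x - f (ph u0 u1 w0 w1 1 x) = - ∫ s in Set.Icc (0 : ℝ) 1, deriv φ s := by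
    rw [hint, h0]; simp [hφ]
  rw [ofReal_rpow_abs _ _ (by linarith), h1, enorm_neg]
  calc _ ≤ (∫⁻ s in Set.Icc (0 : ℝ) 1, ‖deriv φ s‖ₑ) ^ q :=
        ENNReal.rpow_le_rpow (enorm_integral_le_lintegral_enorm _) (by linarith)
    _ ≤ ∫⁻ s in Set.Icc (0 : ℝ) 1, ‖deriv φ s‖ₑ ^ q :=
        jensen _ hq (measurable_deriv φ).enorm.aemeasurable
    _ ≤ _ := by
        apply lintegral_mono_ae
        filter_upwards [hd, ae_restrict_mem measurableSet_Icc] with s hs hs2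
        rw [← ofReal_rpow_abs _ _ (by linarith)]
        apply ENNReal.ofReal_le_ofReal
        exact Real.rpow_le_rpow (abs_nonneg _) (deriv_bound _ _ _ _ _ _ _ (hM s hs2) hM0 hs) (by linarith)

lemma lemA {f : Spin3 → ℝ} (hf : LocallyLipschitz f) {q : ℝ} (hq : 1 < q) (u0 u1 w0 w1 M : ℝ)
    (hM : ∀ s ∈ Set.Icc (0 : ℝ) 1, (u0 + 2 * s * w0) ^ 2 + (u1 + 2 * s * w1) ^ 2 ≤ M ^ 2)
    (hM0 : 0 ≤ M) (k r : Spin3 → ℝ≥0∞) (hk : Measurable k) (hr : Measurable r)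
    (hkr : ∀ x, ∀ s ∈ Set.Icc (0 : ℝ) 1, k x ≤ r (ph u0 u1 w0 w1 s x)) :
    ∫⁻ x, ENNReal.ofReal (|f x - f (ph u0 u1 w0 w1 1 x)| ^ q) * k x ≤
      ENNReal.ofReal (M ^ q) * ∫⁻ x, ENNReal.ofReal (hGrad f x ^ q) * r x := by
  have hS : MeasurableSet {x | DifferentiableAt ℝ f x} := measurableSet_of_differentiableAt ℝ f
  have hphm := (continuous_ph u0 u1 w0 w1).measurable
  have hd0 : ∀ᵐ z : Spin3 × ℝ ∂(volume.prod (volume.restrict (Set.Icc (0 : ℝ) 1))),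
      DifferentiableAt ℝ f (ph u0 u1 w0 w1 z.2 z.1) := by
    have hmeas : MeasurableSet {z : Spin3 × ℝ | DifferentiableAt ℝ f (ph u0 u1 w0 w1 z.2 z.1)} :=
      (hphm.comp measurable_swap) hS
    have h2 : ∀ᵐ z : ℝ × Spin3 ∂((volume.restrict (Set.Icc (0 : ℝ) 1)).prod volume),
      DifferentiableAt ℝ f (ph u0 u1 w0 w1 z.1 z.2) := by
      have hm2 : MeasurableSet {z : ℝ × Spin3 | DifferentiableAt ℝ f (ph u0 u1 w0 w1 z.1 z.2)} := hphm hS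
      rw [Measure.ae_prod_iff_ae_ae hm2]
      refine Eventually.of_forall fun s => ?_
      exact (mp_ph u0 u1 w0 w1 s).quasiMeasurePreserving.ae (ae_diff hf)
    exact (Measure.measurePreserving_swap (μ := (volume : Measure Spin3)) (ν := (volume.restrict (Set.Icc (0 : ℝ) 1)))).quasiMeasurePreserving.ae h2
  have hd := Measure.ae_ae_of_ae_prod hd0
  have hG := measurable_hGrad f
  have hFm : Measurable (fun x => ENNReal.ofReal (hGrad f x ^ q)) := by fun_prop
  have hFr : Measurable (fun x => ENNReal.ofReal (hGrad f x ^ q) * r x) := hFm.mul hr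
  calc _ ≤ ∫⁻ x, ∫⁻ s in Set.Icc (0 : ℝ) 1, ENNReal.ofReal ((M * hGrad f (ph u0 u1 w0 w1 s x)) ^ q) * k x := by
        apply lintegral_mono_ae
        filter_upwards [hd] with x hx
        rw [lintegral_mul_const]
        · gcongr
          exact path_ineq hf hq u0 u1 w0 w1 M x hM hM0 hx
        · have : Measurable (fun s => ph u0 u1 w0 w1 s x) := hphm.comp (measurable_id.prodMk measurable_const)
          have := hG.comp this
          simp only [Function.comp_def] at this
          fun_prop
    _ = ∫⁻ s in Set.Icc (0 : ℝ) 1, ∫⁻ x, ENNReal.ofReal ((M * hGrad f (ph u0 u1 w0 w1 s x)) ^ q) * k x := by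
        apply lintegral_lintegral_swap
        apply Measurable.aemeasurable
        have := hG.comp (hphm.comp (measurable_swap (α := Spin3) (β := ℝ)))
        simp only [Function.comp_def, Prod.swap] at this
        simp only [Function.uncurry_def]
        fun_prop
    _ ≤ ∫⁻ s in Set.Icc (0 : ℝ) 1, ENNReal.ofReal (M ^ q) * ∫⁻ x, ENNReal.ofReal (hGrad f x ^ q) * r x := by
        apply setLIntegral_mono_ae (by fun_prop)
        refine Eventually.of_forall fun s hs => ?_
        rw [← (mp_ph u0 u1 w0 w1 s).lintegral_comp hFr, ← lintegral_const_mul]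
        · apply lintegral_mono
          intro x
          simp only
          rw [Real.mul_rpow hM0 (hGrad_nonneg _ _), ENNReal.ofReal_mul (by positivity), mul_assoc]
          gcongr
          exact hkr x s hs
        · exact hFr.comp (mp_ph u0 u1 w0 w1 s).measurable
    _ = _ := by simp

lemma geo1 (x0 x1 t L g u0 u1 w0 w1 s : ℝ) (hL : 0 ≤ L) (hs0 : 0 ≤ s) (hs1 : s ≤ 1) (hg : 0 ≤ g)
    (hu : u0 ^ 2 + u1 ^ 2 = L ^ 2) (hw : w0 ^ 2 + w1 ^ 2 = L ^ 2 / 16) (huw : u0 * w0 + u1 * w1 = 0)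
    (htw : t * (u0 * w1 - u1 * w0) = |t| * L ^ 2 / 4)
    (hGu : ((x0 ^ 2 + x1 ^ 2) * x0 + 16 * t * x1) * u0 + ((x0 ^ 2 + x1 ^ 2) * x1 - 16 * t * x0) * u1 ≤ - (L * g))
    (hGw : ((x0 ^ 2 + x1 ^ 2) * x0 + 16 * t * x1) * w0 + ((x0 ^ 2 + x1 ^ 2) * x1 - 16 * t * x0) * w1 ≤ (L / 4 * g)) :
    let a := s * u0 + s ^ 2 * w0
    let b := s * u1 + s ^ 2 * w1
    let c := -(2 / 3) * s ^ 3 * (u0 * w1 - u1 * w0)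
    ((x0 + a) ^ 2 + (x1 + b) ^ 2) ^ 2 + 16 * (t + c - 2 * (x0 * b - x1 * a)) ^ 2
      - ((x0 ^ 2 + x1 ^ 2) ^ 2 + 16 * t ^ 2) ≤
      - (3 * (s * L) * g) - 16 / 3 * s ^ 3 * L ^ 2 * |t|
        + 150 * (x0 ^ 2 + x1 ^ 2) * (s * L) ^ 2 + 4 * (s * L) ^ 4 := by
  intro a b c
  set G0 := (x0 ^ 2 + x1 ^ 2) * x0 + 16 * t * x1 with hG0
  set G1 := (x0 ^ 2 + x1 ^ 2) * x1 - 16 * t * x0 with hG1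
  set k := u0 * w1 - u1 * w0 with hk
  set R := x0 ^ 2 + x1 ^ 2 with hR
  set V := a ^ 2 + b ^ 2 with hV
  have hR0 : 0 ≤ R := by positivity
  have hV0 : 0 ≤ V := by positivity
  have hs2 : s ^ 2 ≤ 1 := pow_le_one₀ hs0 hs1
  have hVeq : V = (s * L) ^ 2 * (1 + s ^ 2 / 16) := by
    have : V = s ^ 2 * (u0 ^ 2 + u1 ^ 2) + 2 * s ^ 3 * (u0 * w0 + u1 * w1) + s ^ 4 * (w0 ^ 2 + w1 ^ 2) := by
      simp only [hV, a, b]; ring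
    rw [this, hu, hw, huw]; ring
  have hVle : V ≤ 17 / 16 * (s * L) ^ 2 := by
    rw [hVeq]; nlinarith [sq_nonneg (s * L)]
  have hV2 : V ^ 2 ≤ (17 / 16) ^ 2 * (s * L) ^ 4 := by
    calc V ^ 2 ≤ (17 / 16 * (s * L) ^ 2) ^ 2 := by gcongr
      _ = _ := by ring
  have hk2 : k ^ 2 = L ^ 4 / 16 := by
    have : k ^ 2 = (u0 ^ 2 + u1 ^ 2) * (w0 ^ 2 + w1 ^ 2) - (u0 * w0 + u1 * w1) ^ 2 := by
      simp only [hk]; ring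
    rw [this, hu, hw, huw]; ring
  have hc2 : c ^ 2 ≤ 1 / 36 * (s * L) ^ 4 := by
    have : c ^ 2 = 1 / 36 * (s * L) ^ 4 * s ^ 2 := by
      have : c ^ 2 = 4 / 9 * s ^ 6 * k ^ 2 := by simp only [c]; ring
      rw [this, hk2]; ring
    rw [this]
    exact mul_le_of_le_one_right (by positivity) hs2
  have hA : (x0 * a + x1 * b) ^ 2 ≤ R * V := by
    have h : (x0 * a + x1 * b) ^ 2 = R * V - (x0 * b - x1 * a) ^ 2 := by simp only [hR, hV]; ring
    rw [h]; exact sub_le_self _ (sq_nonneg _)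
  have hO : (x0 * b - x1 * a) ^ 2 ≤ R * V := by
    have h : (x0 * b - x1 * a) ^ 2 = R * V - (x0 * a + x1 * b) ^ 2 := by simp only [hR, hV]; ring
    rw [h]; exact sub_le_self _ (sq_nonneg _)
  have hRV : R * V ≤ R * (17 / 16 * (s * L) ^ 2) := by gcongr
  have hGv : G0 * a + G1 * b ≤ -(3 / 4 * (s * L) * g) := by
    have : G0 * a + G1 * b = s * (G0 * u0 + G1 * u1) + s ^ 2 * (G0 * w0 + G1 * w1) := by
      simp only [a, b]; ring
    rw [this]
    have e1 := mul_le_mul_of_nonneg_left hGu hs0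
    have e2 := mul_le_mul_of_nonneg_left hGw (sq_nonneg s)
    have e3 : s ^ 2 * (L / 4 * g) ≤ s * (L / 4 * g) := by
      have : s ^ 2 ≤ s := pow_le_of_le_one hs0 hs1 two_ne_zero
      gcongr
    linarith
  have htc : t * c = -(1 / 6) * s ^ 3 * L ^ 2 * |t| := by
    have : t * c = -(2 / 3) * s ^ 3 * (t * k) := by simp only [c]; ring
    rw [this, htw]; ring
  have key : ((x0 + a) ^ 2 + (x1 + b) ^ 2) ^ 2 + 16 * (t + c - 2 * (x0 * b - x1 * a)) ^ 2
      - (R ^ 2 + 16 * t ^ 2) = 4 * (G0 * a + G1 * b) + 32 * (t * c) + (2 * R * V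
        + 4 * (x0 * a + x1 * b) ^ 2 + 4 * (x0 * a + x1 * b) * V + V ^ 2 +
        16 * (c - 2 * (x0 * b - x1 * a)) ^ 2) := by
    simp only [hG0, hG1, hR, hV]; ring
  rw [key, htc]
  clear_value a b c V R G0 G1 k
  have e4 : 16 * (c - 2 * (x0 * b - x1 * a)) ^ 2 ≤ 32 * c ^ 2 + 128 * (x0 * b - x1 * a) ^ 2 := by
    linarith [sq_nonneg (c + 2 * (x0 * b - x1 * a))]
  have e5 : 4 * (x0 * a + x1 * b) * V ≤ 4 * (x0 * a + x1 * b) ^ 2 + V ^ 2 := by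
    linarith [sq_nonneg (2 * (x0 * a + x1 * b) - V)]
  have e6 : 0 ≤ (s * L) ^ 4 := by positivity
  have e7 : 0 ≤ R * (s * L) ^ 2 := by positivity
  linarith

/-- outside a compact set the main terms dominate. -/
lemma geo2 (r t L g s : ℝ) (hr : 0 ≤ r) (hL : 1 ≤ L) (hs0 : 0 ≤ s) (hs1 : s ≤ 1)
    (hg : (r ^ 3 + 16 * |t| * r) / 2 ≤ g) (hx : 880 * L ≤ r ∨ 20000 * L ^ 2 ≤ |t|) :
    - (3 * (s * L) * g) - 16 / 3 * s ^ 3 * L ^ 2 * |t| + 150 * r ^ 2 * (s * L) ^ 2 + 4 * (s * L) ^ 4 ≤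
     - (3 / 4 * (s * L) * (r ^ 3 + 16 * |t| * r)) - 8 / 3 * s ^ 3 * L ^ 2 * |t| := by
  have hσ : 0 ≤ s * L := by positivity
  have hσL : s * L ≤ L := by nlinarith
  have ht := abs_nonneg t
  have h1 : 3 * (s * L) * ((r ^ 3 + 16 * |t| * r) / 2) ≤ 3 * (s * L) * g := by gcongr
  suffices h : 150 * r ^ 2 * (s * L) ^ 2 + 4 * (s * L) ^ 4 ≤
      (3 / 4 * (s * L) * (r ^ 3 + 16 * |t| * r)) + 8 / 3 * s ^ 3 * L ^ 2 * |t| by linarith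
  have hp1 : 0 ≤ 8 / 3 * s ^ 3 * L ^ 2 * |t| := by positivity
  have hp2 : 0 ≤ (s * L) * |t| * r := by positivity
  have hp3 : 0 ≤ (s * L) * r ^ 3 := by positivity
  by_cases hrL : 880 * L ≤ r
  · have a1 : 150 * r ^ 2 * (s * L) ^ 2 ≤ 1 / 4 * ((s * L) * r ^ 3) := by
      have : 150 * r ^ 2 * (s * L) ^ 2 = (s * L) * r ^ 2 * (150 * (s * L)) := by ring
      rw [this]
      have : 1 / 4 * ((s * L) * r ^ 3) = (s * L) * r ^ 2 * (r / 4) := by ring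
      rw [this]
      gcongr
      linarith
    have a2 : 4 * (s * L) ^ 4 ≤ 1 / 4 * ((s * L) * r ^ 3) := by
      have : (16 * (s * L)) ^ 3 ≤ r ^ 3 := by
        gcongr
        linarith
      nlinarith
    linarith
  · have hT : 20000 * L ^ 2 ≤ |t| := by tauto
    push Not at hrL
    have a1 : 150 * r ^ 2 * (s * L) ^ 2 ≤ 12 * ((s * L) * |t| * r) := by
      have e : 150 * r ^ 2 * (s * L) ^ 2 = (s * L) * r * (150 * (r * (s * L))) := by ring
      have e2 : 12 * ((s * L) * |t| * r) = (s * L) * r * (12 * |t|) := by ring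
      rw [e, e2]
      have e3 : r * (s * L) ≤ 880 * L * L := by gcongr
      refine mul_le_mul_of_nonneg_left ?_ (by positivity)
      nlinarith
    have a2 : 4 * (s * L) ^ 4 ≤ 8 / 3 * s ^ 3 * L ^ 2 * |t| := by
      have e : 4 * (s * L) ^ 4 = s ^ 3 * L ^ 2 * (4 * s * L ^ 2) := by ring
      have e2 : 8 / 3 * s ^ 3 * L ^ 2 * |t| = s ^ 3 * L ^ 2 * (8 / 3 * |t|) := by ring
      rw [e, e2]
      refine mul_le_mul_of_nonneg_left ?_ (by positivity)
      nlinarith [mul_le_mul_of_nonneg_right hs1 (sq_nonneg L)]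
    linarith

lemma geo3 (r t L : ℝ) (hr : 0 ≤ r) (hL : 1 ≤ L) (hx : 880 * L ≤ r ∨ 20000 * L ^ 2 ≤ |t|) :
    L ^ 2 / 20 * (r ^ 2 + 4 * |t|) ≤ 3 / 4 * L * (r ^ 3 + 16 * |t| * r) + 8 / 3 * L ^ 2 * |t| := by
  have ht := abs_nonneg t
  have hp2 : 0 ≤ L * |t| * r := by positivity
  have hp3 : 0 ≤ L * r ^ 3 := by positivity
  have hp4 : 0 ≤ L ^ 2 * |t| := by positivity
  by_cases hrL : 880 * L ≤ r
  · have : L * r ^ 2 * (880 * L) ≤ L * r ^ 2 * r := by gcongr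
    nlinarith
  · have hT : 20000 * L ^ 2 ≤ |t| := by tauto
    push Not at hrL
    have h1 : r ^ 2 ≤ (880 * L) ^ 2 := by gcongr
    have h2 : r ^ 2 ≤ 40 * |t| := by nlinarith
    have h3 : L ^ 2 * r ^ 2 ≤ L ^ 2 * (40 * |t|) := by gcongr
    nlinarith

/-- choice of direction -/
lemma geo4 (G0 G1 t L : ℝ) (hL : 0 ≤ L) : ∃ u0 ∈ ({0, L, -L} : Finset ℝ), ∃ u1 ∈ ({0, L, -L} : Finset ℝ),
    ∃ w0 ∈ ({0, L / 4, -(L / 4)} : Finset ℝ), ∃ w1 ∈ ({0, L / 4, -(L / 4)} : Finset ℝ),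
    u0 ^ 2 + u1 ^ 2 = L ^ 2 ∧ w0 ^ 2 + w1 ^ 2 = L ^ 2 / 16 ∧ u0 * w0 + u1 * w1 = 0 ∧
    t * (u0 * w1 - u1 * w0) = |t| * L ^ 2 / 4 ∧
    G0 * u0 + G1 * u1 ≤ - (L * max |G0| |G1|) ∧ G0 * w0 + G1 * w1 ≤ L / 4 * max |G0| |G1| := by
  have hsg : ∀ y : ℝ, ∃ e : ℝ, (e = 1 ∨ e = -1) ∧ y * e = |y| := by
    intro y
    rcases le_total 0 y with h | h
    · exact ⟨1, Or.inl rfl, by rw [abs_of_nonneg h, mul_one]⟩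
    · exact ⟨-1, Or.inr rfl, by rw [abs_of_nonpos h]; ring⟩
  obtain ⟨e0, he0, hG0⟩ := hsg G0
  obtain ⟨e1, he1, hG1⟩ := hsg G1
  obtain ⟨e, he, hte⟩ := hsg t
  have sq : ∀ e : ℝ, (e = 1 ∨ e = -1) → e ^ 2 = 1 := by rintro e (rfl | rfl) <;> norm_num
  have ab : ∀ y e : ℝ, (e = 1 ∨ e = -1) → y * e ≤ |y| := by
    rintro y e (rfl | rfl)
    · simpa using le_abs_self y
    · simpa using neg_le_abs y
  rcases le_total |G1| |G0| with h | h
  · refine ⟨-L * e0, ?_, 0, by simp, 0, by simp, L / 4 * (-e0 * e), ?_, ?_, ?_, ?_, ?_, ?_, ?_⟩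
    · rcases he0 with rfl | rfl <;> simp
    · rcases he0 with rfl | rfl <;> rcases he with rfl | rfl <;> simp
    · linear_combination L ^ 2 * sq _ he0
    · have := sq _ he0; have := sq _ he
      linear_combination L ^ 2 / 16 * e ^ 2 * sq _ he0 + L ^ 2 / 16 * sq _ he
    · ring
    · linear_combination L ^ 2 / 4 * t * e * sq _ he0 + L ^ 2 / 4 * hte
    · rw [max_eq_left h]; apply le_of_eq; linear_combination -L * hG0
    · rw [max_eq_left h]
      have : G1 * (-e0 * e) ≤ |G1| := ab _ _ (by rcases he0 with rfl | rfl <;> rcases he with rfl | rfl <;> simp)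
      have := mul_le_mul_of_nonneg_left (this.trans h) (by positivity : 0 ≤ L / 4)
      linarith
  · refine ⟨0, by simp, -L * e1, ?_, L / 4 * (e1 * e), ?_, 0, by simp, ?_, ?_, ?_, ?_, ?_, ?_⟩
    · rcases he1 with rfl | rfl <;> simp
    · rcases he1 with rfl | rfl <;> rcases he with rfl | rfl <;> simp
    · linear_combination L ^ 2 * sq _ he1
    · linear_combination L ^ 2 / 16 * e ^ 2 * sq _ he1 + L ^ 2 / 16 * sq _ he
    · ring
    · linear_combination L ^ 2 / 4 * t * e * sq _ he1 + L ^ 2 / 4 * hte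
    · rw [max_eq_right h]; apply le_of_eq; linear_combination -L * hG1
    · rw [max_eq_right h]
      have : G0 * (e1 * e) ≤ |G0| := ab _ _ (by rcases he1 with rfl | rfl <;> rcases he with rfl | rfl <;> simp)
      have := mul_le_mul_of_nonneg_left (this.trans h) (by positivity : 0 ≤ L / 4)
      linarith

lemma geo5 (x0 x1 t r : ℝ) (hr : r ^ 2 = x0 ^ 2 + x1 ^ 2) :
    (r ^ 3 + 16 * |t| * r) / 2 ≤ max |(x0 ^ 2 + x1 ^ 2) * x0 + 16 * t * x1| |(x0 ^ 2 + x1 ^ 2) * x1 - 16 * t * x0| := by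
  set G0 := (x0 ^ 2 + x1 ^ 2) * x0 + 16 * t * x1 with hG0
  set G1 := (x0 ^ 2 + x1 ^ 2) * x1 - 16 * t * x0 with hG1
  set m := max |G0| |G1|
  have h0 : G0 ^ 2 ≤ m ^ 2 := by rw [← sq_abs]; gcongr; exact le_max_left _ _
  have h1 : G1 ^ 2 ≤ m ^ 2 := by rw [← sq_abs G1]; gcongr; exact le_max_right _ _
  have hm : 0 ≤ m := (abs_nonneg _).trans (le_max_left _ _)
  apply le_of_sq_le_sq _ hm
  have e : G0 ^ 2 + G1 ^ 2 = r ^ 6 + 256 * |t| ^ 2 * r ^ 2 := by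
    rw [sq_abs, show r ^ 6 = (r ^ 2) ^ 3 by ring, hr, hG0, hG1]; ring
  nlinarith [sq_nonneg (r ^ 3 - 16 * |t| * r)]

def kP (x : Spin3) : ℝ := (x 0 ^ 2 + x 1 ^ 2) ^ 2 + 16 * x 2 ^ 2

lemma kP_nonneg (x : Spin3) : 0 ≤ kP x := by unfold kP; positivity

lemma kaplan_rpow (x : Spin3) (p : ℝ) : kaplan x ^ p = kP x ^ (p / 4) := by
  have : kaplan x = kP x ^ ((1 : ℝ) / 4) := rfl
  rw [this, ← Real.rpow_mul (kP_nonneg x)]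
  congr 1; ring

lemma kaplan_rpow' (x : Spin3) (p : ℝ) : kaplan x ^ p = Real.sqrt (kP x) ^ (p / 2) := by
  rw [kaplan_rpow, Real.sqrt_eq_rpow, ← Real.rpow_mul (kP_nonneg x)]
  congr 1; ring

lemma drop_aux (y y' d p : ℝ) (hp : 2 ≤ p) (hy : 1 ≤ y) (hd : 0 ≤ d) (hy' : 0 ≤ y')
    (h : y' ^ 2 ≤ y ^ 2 - 2 * d * y) : y' ^ (p / 2) ≤ y ^ (p / 2) - d := by
  have hdy : d ≤ y := by nlinarith [sq_nonneg y']
  have h1 : y' ≤ y - d := by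
    apply le_of_sq_le_sq _ (by linarith)
    nlinarith [sq_nonneg d]
  have hy0 : 0 < y := by linarith
  have hfr : 0 ≤ 1 - d / y := by
    rw [sub_nonneg, div_le_one hy0]; exact hdy
  have hfr1 : 1 - d / y ≤ 1 := by
    have : 0 ≤ d / y := by positivity
    linarith
  calc y' ^ (p / 2) ≤ (y - d) ^ (p / 2) := by gcongr
    _ = (y * (1 - d / y)) ^ (p / 2) := by congr 1; field_simp
    _ = y ^ (p / 2) * (1 - d / y) ^ (p / 2) := Real.mul_rpow hy0.le hfr
    _ ≤ y ^ (p / 2) * (1 - d / y) := by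
        gcongr
        simpa using Real.rpow_le_rpow_of_exponent_ge' hfr hfr1 zero_le_one (by linarith : (1 : ℝ) ≤ p / 2)
    _ ≤ y ^ (p / 2) - d := by
        have h2 : y ≤ y ^ (p / 2) := by
          simpa using Real.rpow_le_rpow_of_exponent_le hy (by linarith : (1 : ℝ) ≤ p / 2)
        have h3 : y * (d / y) ≤ y ^ (p / 2) * (d / y) := by gcongr
        have h4 : y * (d / y) = d := by field_simp
        linarith

def TT (L : ℝ) : Finset (ℝ × ℝ × ℝ × ℝ) :=
  ({0, L, -L} : Finset ℝ) ×ˢ ({0, L, -L} : Finset ℝ) ×ˢ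
    ({0, L / 4, -(L / 4)} : Finset ℝ) ×ˢ ({0, L / 4, -(L / 4)} : Finset ℝ)

lemma TT_card (L : ℝ) : (TT L).card ≤ 81 := by
  unfold TT
  simp only [Finset.card_product]
  have h : ∀ a b c : ℝ, ({a, b, c} : Finset ℝ).card ≤ 3 := fun a b c => Finset.card_le_three
  calc _ ≤ 3 * (3 * (3 * 3)) := by
        gcongr <;> apply h
    _ = 81 := by norm_num

lemma TT_speed (L : ℝ) (hL : 0 ≤ L) (z) (hz : z ∈ TT L) : ∀ s ∈ Set.Icc (0 : ℝ) 1,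
    (z.1 + 2 * s * z.2.2.1) ^ 2 + (z.2.1 + 2 * s * z.2.2.2) ^ 2 ≤ (3 * L) ^ 2 := by
  intro s hs
  simp only [TT, Finset.mem_product] at hz
  obtain ⟨h1, h2, h3, h4⟩ := hz
  have hb : ∀ a : ℝ, a ∈ ({0, L, -L} : Finset ℝ) → |a| ≤ L := by
    intro a ha
    simp only [Finset.mem_insert, Finset.mem_singleton] at ha
    rcases ha with rfl | rfl | rfl <;> simp [abs_of_nonneg, hL]
  have hb' : ∀ a : ℝ, a ∈ ({0, L / 4, -(L / 4)} : Finset ℝ) → |a| ≤ L / 4 := by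
    intro a ha
    simp only [Finset.mem_insert, Finset.mem_singleton] at ha
    have : |L| = L := abs_of_nonneg hL
    have h4 : 0 ≤ L / 4 := by positivity
    rcases ha with rfl | rfl | rfl <;> simp [abs_div, this, h4]
  have key : ∀ a b : ℝ, |a| ≤ L → |b| ≤ L / 4 → (a + 2 * s * b) ^ 2 ≤ (2 * L) ^ 2 := by
    intro a b ha hb
    apply sq_le_sq'
    · have := neg_abs_le a; have := neg_abs_le b; have := hs.1; have := hs.2
      nlinarith [abs_nonneg b, abs_le.1 hb]
    · have := le_abs_self a; have := hs.1; have := hs.2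
      nlinarith [abs_nonneg b, abs_le.1 hb]
  have k1 := key _ _ (hb _ h1) (hb' _ h3)
  have k2 := key _ _ (hb _ h2) (hb' _ h4)
  nlinarith [sq_nonneg L]

lemma geo (p L : ℝ) (hp : 2 ≤ p) (hL : 1 ≤ L) (x : Spin3)
    (hx : x ∉ Metric.closedBall (0 : Spin3) (20000 * L ^ 2)) :
    ∃ z ∈ TT L, (∀ s ∈ Set.Icc (0 : ℝ) 1, kaplan (ph z.1 z.2.1 z.2.2.1 z.2.2.2 s x) ^ p ≤ kaplan x ^ p) ∧
      kaplan (ph z.1 z.2.1 z.2.2.1 z.2.2.2 1 x) ^ p ≤ kaplan x ^ p - L ^ 2 / 40 := by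
  set r := Real.sqrt (x 0 ^ 2 + x 1 ^ 2) with hr
  have hr0 : 0 ≤ r := Real.sqrt_nonneg _
  have hr2 : r ^ 2 = x 0 ^ 2 + x 1 ^ 2 := Real.sq_sqrt (by positivity)
  have hL2 : L ≤ L ^ 2 := by nlinarith
  have hx' : 880 * L ≤ r ∨ 20000 * L ^ 2 ≤ |x 2| := by
    by_contra hcon
    push Not at hcon
    obtain ⟨c1, c2⟩ := hcon
    apply hx
    rw [mem_closedBall_zero_iff, pi_norm_le_iff_of_nonneg (by positivity)]
    have h0 : |x 0| ≤ r := Real.abs_le_sqrt (by nlinarith [sq_nonneg (x 1)])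
    have h1 : |x 1| ≤ r := Real.abs_le_sqrt (by nlinarith [sq_nonneg (x 0)])
    intro i
    rw [Real.norm_eq_abs]
    fin_cases i
    · simp only [Fin.zero_eta]; linarith
    · simp only [Fin.mk_one]; linarith
    · simp only [Fin.reduceFinMk]; linarith
  obtain ⟨u0, hu0, u1, hu1, w0, hw0, w1, hw1, hu, hw, huw, htw, hGu, hGw⟩ :=
    geo4 ((x 0 ^ 2 + x 1 ^ 2) * x 0 + 16 * x 2 * x 1) ((x 0 ^ 2 + x 1 ^ 2) * x 1 - 16 * x 2 * x 0) (x 2) L (by linarith)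
  have h5 := geo5 (x 0) (x 1) (x 2) r hr2
  set g := max |(x 0 ^ 2 + x 1 ^ 2) * x 0 + 16 * x 2 * x 1| |(x 0 ^ 2 + x 1 ^ 2) * x 1 - 16 * x 2 * x 0|
  have hg0 : 0 ≤ g := (abs_nonneg _).trans (le_max_left _ _)
  have hmain : ∀ s ∈ Set.Icc (0 : ℝ) 1, kP (ph u0 u1 w0 w1 s x) - kP x ≤
      - (3 / 4 * (s * L) * (r ^ 3 + 16 * |x 2| * r)) - 8 / 3 * s ^ 3 * L ^ 2 * |x 2| := by
    intro s hs
    have e1 := geo1 (x 0) (x 1) (x 2) L g u0 u1 w0 w1 s (by linarith) hs.1 hs.2 hg0 hu hw huw htw hGu hGw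
    have e2 := geo2 r (x 2) L g s hr0 hL hs.1 hs.2 h5 hx'
    rw [hr2] at e2
    exact e1.trans e2
  refine ⟨(u0, u1, w0, w1), by simp only [TT, Finset.mem_product]; exact ⟨hu0, hu1, hw0, hw1⟩, ?_, ?_⟩
  · intro s hs
    simp only
    rw [kaplan_rpow, kaplan_rpow]
    apply Real.rpow_le_rpow (kP_nonneg _) _ (by linarith)
    have := hmain s hs
    have h1 := hs.1
    have : 0 ≤ 3 / 4 * (s * L) * (r ^ 3 + 16 * |x 2| * r) := by positivity
    have : 0 ≤ 8 / 3 * s ^ 3 * L ^ 2 * |x 2| := by positivity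
    linarith
  · simp only
    rw [kaplan_rpow', kaplan_rpow']
    have e3 := geo3 r (x 2) L hr0 hL hx'
    have e4 := hmain 1 (by simp)
    have hsq : Real.sqrt (kP x) ≤ r ^ 2 + 4 * |x 2| := by
      apply Real.sqrt_le_iff.2 ⟨by positivity, ?_⟩
      rw [kP, ← hr2]
      have : 0 ≤ r ^ 2 * |x 2| := by positivity
      have h2 := sq_abs (x 2)
      have h3 : (r ^ 2 + 4 * |x 2|) ^ 2 = (r ^ 2) ^ 2 + 16 * |x 2| ^ 2 + 8 * (r ^ 2 * |x 2|) := by ring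
      rw [h3, h2]
      linarith
    have hge : 1 ≤ Real.sqrt (kP x) := by
      rw [Real.one_le_sqrt, kP, ← hr2]
      rcases hx' with h | h
      · have h1 : 1 ≤ r := by linarith
        have h2 : 1 ≤ (r ^ 2) ^ 2 := one_le_pow₀ (one_le_pow₀ h1)
        linarith [sq_nonneg (x 2)]
      · have h1 : 1 ≤ |x 2| := by linarith
        have h2 : 1 ≤ |x 2| ^ 2 := one_le_pow₀ h1
        rw [sq_abs] at h2
        linarith [sq_nonneg (r ^ 2)]
    apply drop_aux _ _ _ _ hp hge (by positivity) (Real.sqrt_nonneg _)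
    rw [Real.sq_sqrt (kP_nonneg _), Real.sq_sqrt (kP_nonneg _)]
    have := mul_le_mul_of_nonneg_left hsq (by positivity : 0 ≤ L ^ 2 / 20)
    linarith

def rho (α p : ℝ) (x : Spin3) : ℝ≥0∞ := ENNReal.ofReal (Real.exp (-(α * kaplan x ^ p)))

lemma continuous_kaplan : Continuous kaplan := by
  unfold kaplan
  apply Continuous.rpow_const (by fun_prop)
  intro x; right; norm_num

lemma continuous_kaplan_rpow (p : ℝ) (hp : 0 ≤ p) : Continuous (fun x => kaplan x ^ p) :=
  continuous_kaplan.rpow_const fun _ => Or.inr hp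

lemma measurable_rho (α p : ℝ) (hp : 0 ≤ p) : Measurable (rho α p) := by
  have := (continuous_kaplan_rpow p hp).measurable
  unfold rho
  fun_prop

lemma kaplan_nonneg (x) : 0 ≤ kaplan x := by unfold kaplan; positivity

lemma rho_le_one (α p : ℝ) (hα : 0 < α) (x) : rho α p x ≤ 1 := by
  unfold rho
  rw [ENNReal.ofReal_le_one, Real.exp_le_one_iff]
  have := Real.rpow_nonneg (kaplan_nonneg x) p
  have : 0 ≤ α * kaplan x ^ p := by positivity
  linarith

lemma convex_q (a b q : ℝ) (hq1 : 1 < q) (hq2 : q ≤ 2) :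
    ENNReal.ofReal (|a| ^ q) ≤ 2 * (ENNReal.ofReal (|a - b| ^ q) + ENNReal.ofReal (|b| ^ q)) := by
  simp only [ofReal_rpow_abs _ q (by linarith)]
  calc ‖a‖ₑ ^ q ≤ (‖a - b‖ₑ + ‖b‖ₑ) ^ q := by
        gcongr
        calc ‖a‖ₑ = ‖(a - b) + b‖ₑ := by simp
          _ ≤ _ := enorm_add_le _ _
    _ ≤ 2 ^ (q - 1) * (‖a - b‖ₑ ^ q + ‖b‖ₑ ^ q) := ENNReal.rpow_add_le_mul_rpow_add_rpow _ _ hq1.le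
    _ ≤ _ := by
        gcongr
        calc (2 : ℝ≥0∞) ^ (q - 1) ≤ 2 ^ (1 : ℝ) :=
              ENNReal.rpow_le_rpow_of_exponent_le (by norm_num) (by linarith)
          _ = 2 := by simp

lemma absorb (A X : ℝ≥0∞) (hA : A ≠ ⊤) (h : A ≤ X + A / 2) : A ≤ 2 * X := by
  have h1 : A / 2 + A / 2 ≤ X + A / 2 := by rwa [ENNReal.add_halves]
  have h2 : A / 2 ≤ X := (ENNReal.add_le_add_iff_right (ENNReal.div_ne_top hA (by norm_num))).1 h1
  calc A = A / 2 + A / 2 := (ENNReal.add_halves A).symm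
    _ ≤ X + X := by gcongr
    _ = 2 * X := by ring

def DD (p L : ℝ) (z : ℝ × ℝ × ℝ × ℝ) : Set Spin3 :=
  {x | (∀ s ∈ Set.Icc (0 : ℝ) 1, kaplan (ph z.1 z.2.1 z.2.2.1 z.2.2.2 s x) ^ p ≤ kaplan x ^ p) ∧
      kaplan (ph z.1 z.2.1 z.2.2.1 z.2.2.2 1 x) ^ p ≤ kaplan x ^ p - L ^ 2 / 40}

lemma measurableSet_DD (p L : ℝ) (hp : 0 ≤ p) (z) : MeasurableSet (DD p L z) := by
  apply IsClosed.measurableSet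
  have hk := continuous_kaplan_rpow p hp
  have hc : ∀ s, Continuous (fun x => kaplan (ph z.1 z.2.1 z.2.2.1 z.2.2.2 s x) ^ p) := fun s =>
    hk.comp ((continuous_ph _ _ _ _).comp (Continuous.prodMk continuous_const continuous_id))
  have : DD p L z = (⋂ s ∈ Set.Icc (0 : ℝ) 1, {x | kaplan (ph z.1 z.2.1 z.2.2.1 z.2.2.2 s x) ^ p ≤ kaplan x ^ p}) ∩
      {x | kaplan (ph z.1 z.2.1 z.2.2.1 z.2.2.2 1 x) ^ p ≤ kaplan x ^ p - L ^ 2 / 40} := by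
    ext x; simp [DD]
  rw [this]
  apply IsClosed.inter
  · exact isClosed_biInter fun s _ => isClosed_le (hc s) hk
  · exact isClosed_le (hc 1) (hk.sub continuous_const)

lemma piece {q p α L : ℝ} (hq1 : 1 < q) (hq2 : q ≤ 2) (hp : 2 ≤ p) (hα : 0 < α) (hL : 1 ≤ L)
    (hLα : 324 ≤ α * (L ^ 2 / 40)) {f : Spin3 → ℝ} (hf : LocallyLipschitz f) (z) (hz : z ∈ TT L) :
    ∫⁻ x, (DD p L z).indicator (fun x => ENNReal.ofReal (|f x| ^ q) * rho α p x) x ≤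
      2 * (ENNReal.ofReal ((3 * L) ^ q) * ∫⁻ x, ENNReal.ofReal (hGrad f x ^ q) * rho α p x) +
      ENNReal.ofReal (1 / 162) * ∫⁻ x, ENNReal.ofReal (|f x| ^ q) * rho α p x := by
  have hfm : Measurable f := hf.continuous.measurable
  have hrm := measurable_rho α p (by linarith)
  have hD := measurableSet_DD p L (by linarith) z
  set k := (DD p L z).indicator (rho α p) with hk
  have hkm : Measurable k := hrm.indicator hD
  set Φ := ph z.1 z.2.1 z.2.2.1 z.2.2.2 1 with hΦ
  have hΦmp : MeasurePreserving Φ volume volume := mp_ph _ _ _ _ _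
  have hΦm := hΦmp.measurable
  have hA := lemA hf hq1 z.1 z.2.1 z.2.2.1 z.2.2.2 (3 * L) (TT_speed L (by linarith) z hz) (by positivity)
    k (rho α p) hkm hrm (by
      intro x s hs
      by_cases hx : x ∈ DD p L z
      · rw [hk, Set.indicator_of_mem hx]
        unfold rho
        have := mul_le_mul_of_nonneg_left (hx.1 s hs) hα.le
        gcongr
      · rw [hk, Set.indicator_of_notMem hx]; exact zero_le)
  have hk2 : ∀ x, k x ≤ ENNReal.ofReal (1 / 324) * rho α p (Φ x) := by
    intro x
    by_cases hx : x ∈ DD p L z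
    · rw [hk, Set.indicator_of_mem hx]
      unfold rho
      rw [← ENNReal.ofReal_mul (by norm_num)]
      apply ENNReal.ofReal_le_ofReal
      have h1 := mul_le_mul_of_nonneg_left hx.2 hα.le
      have h2 : Real.exp (-324) ≤ 1 / 324 := by
        rw [Real.exp_neg, one_div]
        gcongr
        linarith [Real.add_one_le_exp (324 : ℝ)]
      calc Real.exp (-(α * kaplan x ^ p)) ≤ Real.exp (-324 + -(α * kaplan (Φ x) ^ p)) := by
            apply Real.exp_le_exp.2
            linarith
        _ = Real.exp (-324) * Real.exp (-(α * kaplan (Φ x) ^ p)) := Real.exp_add _ _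
        _ ≤ _ := by gcongr
    · rw [hk, Set.indicator_of_notMem hx]; exact zero_le
  have hFm : Measurable (fun x => ENNReal.ofReal (|f x| ^ q) * rho α p x) := by fun_prop
  calc _ ≤ ∫⁻ x, (2 * (ENNReal.ofReal (|f x - f (Φ x)| ^ q) * k x) +
          ENNReal.ofReal (1 / 162) * (ENNReal.ofReal (|f (Φ x)| ^ q) * rho α p (Φ x))) := by
        apply lintegral_mono
        intro x
        have e1 : (DD p L z).indicator (fun x => ENNReal.ofReal (|f x| ^ q) * rho α p x) x =
            ENNReal.ofReal (|f x| ^ q) * k x := by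
          by_cases hx : x ∈ DD p L z <;> simp [hk, hx]
        rw [e1]
        calc _ ≤ 2 * (ENNReal.ofReal (|f x - f (Φ x)| ^ q) + ENNReal.ofReal (|f (Φ x)| ^ q)) * k x := by
              gcongr
              exact convex_q _ _ _ hq1 hq2
          _ = 2 * (ENNReal.ofReal (|f x - f (Φ x)| ^ q) * k x) + 2 * (ENNReal.ofReal (|f (Φ x)| ^ q) * k x) := by ring
          _ ≤ 2 * (ENNReal.ofReal (|f x - f (Φ x)| ^ q) * k x) + 2 * (ENNReal.ofReal (|f (Φ x)| ^ q) * (ENNReal.ofReal (1 / 324) * rho α p (Φ x))) := by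
              gcongr
              exact hk2 x
          _ = _ := by
              have : ENNReal.ofReal (1 / 162) = 2 * ENNReal.ofReal (1 / 324) := by
                rw [show (2 : ℝ≥0∞) = ENNReal.ofReal 2 by simp, ← ENNReal.ofReal_mul (by norm_num)]
                norm_num
              rw [this]; ring
    _ = 2 * (∫⁻ x, ENNReal.ofReal (|f x - f (Φ x)| ^ q) * k x) +
          ENNReal.ofReal (1 / 162) * ∫⁻ x, ENNReal.ofReal (|f (Φ x)| ^ q) * rho α p (Φ x) := by
        rw [lintegral_add_left (by fun_prop), lintegral_const_mul _ (by fun_prop), lintegral_const_mul _ (by fun_prop)]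
    _ ≤ _ := by
        rw [hΦmp.lintegral_comp hFm]
        gcongr

lemma step1 {q p α : ℝ} (hq1 : 1 < q) (hq2 : q ≤ 2) (hp : 2 ≤ p) (hα : 0 < α)
    (hfin : ∫⁻ x, rho α p x ≠ ⊤) :
    ∃ R C : ℝ, 1 ≤ R ∧ 1 ≤ C ∧ ∀ f : Spin3 → ℝ, LocallyLipschitz f → (∃ B, ∀ x, |f x| ≤ B) →
      ∫⁻ x, ENNReal.ofReal (|f x| ^ q) * rho α p x ≤
        ENNReal.ofReal C * ((∫⁻ x, ENNReal.ofReal (hGrad f x ^ q) * rho α p x) +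
          ∫⁻ x in Metric.closedBall (0 : Spin3) R, ENNReal.ofReal (|f x| ^ q)) := by
  set L : ℝ := 1 + 12960 / α with hLdef
  have hL : 1 ≤ L := by
    have : 0 ≤ 12960 / α := by positivity
    linarith
  have hLα : 324 ≤ α * (L ^ 2 / 40) := by
    have h1 : L ≤ L ^ 2 := by nlinarith
    have h2 : α * L = α + 12960 := by rw [hLdef]; field_simp
    have h3 := mul_le_mul_of_nonneg_left h1 hα.le
    linarith
  set M : ℝ := (3 * L) ^ q with hMdef
  have hM0 : 0 ≤ M := by positivity
  refine ⟨20000 * L ^ 2, 2 + 324 * M, by nlinarith, by linarith, ?_⟩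
  rintro f hf ⟨B, hB⟩
  have hfm : Measurable f := hf.continuous.measurable
  have hrm := measurable_rho α p (by linarith)
  set A := ∫⁻ x, ENNReal.ofReal (|f x| ^ q) * rho α p x with hA
  set E := ∫⁻ x, ENNReal.ofReal (hGrad f x ^ q) * rho α p x with hE
  set I := ∫⁻ x in Metric.closedBall (0 : Spin3) (20000 * L ^ 2), ENNReal.ofReal (|f x| ^ q) with hI
  have hAtop : A ≠ ⊤ := by
    apply ne_of_lt
    calc A ≤ ∫⁻ x, ENNReal.ofReal (B ^ q) * rho α p x := by
          apply lintegral_mono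
          intro x
          simp only
          gcongr
          exact hB x
      _ = ENNReal.ofReal (B ^ q) * ∫⁻ x, rho α p x := lintegral_const_mul _ hrm
      _ < ⊤ := ENNReal.mul_lt_top ENNReal.ofReal_lt_top (lt_top_iff_ne_top.2 hfin)
  have hmain : A ≤ I + ∑ z ∈ TT L, ∫⁻ x, (DD p L z).indicator (fun x => ENNReal.ofReal (|f x| ^ q) * rho α p x) x := by
    rw [hI, ← lintegral_indicator Metric.isClosed_closedBall.measurableSet, ← lintegral_finsetSum, ← lintegral_add_left]
    · apply lintegral_mono
      intro x
      simp only
      by_cases hx : x ∈ Metric.closedBall (0 : Spin3) (20000 * L ^ 2)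
      · rw [Set.indicator_of_mem hx]
        calc _ ≤ ENNReal.ofReal (|f x| ^ q) * 1 := by gcongr; exact rho_le_one α p hα x
          _ ≤ _ := by rw [mul_one]; exact le_self_add
      · obtain ⟨z, hz, hzD⟩ := geo p L hp hL x hx
        have hzD' : x ∈ DD p L z := hzD
        calc _ = (DD p L z).indicator (fun x => ENNReal.ofReal (|f x| ^ q) * rho α p x) x := by
              rw [Set.indicator_of_mem hzD']
          _ ≤ ∑ z ∈ TT L, (DD p L z).indicator (fun x => ENNReal.ofReal (|f x| ^ q) * rho α p x) x :=
              Finset.single_le_sum (f := fun z => (DD p L z).indicator (fun x => ENNReal.ofReal (|f x| ^ q) * rho α p x) x) (fun _ _ => zero_le) hz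
          _ ≤ _ := le_add_self
    · exact Measurable.indicator (by fun_prop) Metric.isClosed_closedBall.measurableSet
    · intro z _
      exact Measurable.indicator (by fun_prop) (measurableSet_DD p L (by linarith) z)
  have hsum : ∑ z ∈ TT L, ∫⁻ x, (DD p L z).indicator (fun x => ENNReal.ofReal (|f x| ^ q) * rho α p x) x ≤
      81 * (2 * (ENNReal.ofReal M * E) + ENNReal.ofReal (1 / 162) * A) := by
    calc _ ≤ ∑ z ∈ TT L, (2 * (ENNReal.ofReal M * E) + ENNReal.ofReal (1 / 162) * A) :=
          Finset.sum_le_sum fun z hz => piece hq1 hq2 hp hα hL hLα hf z hz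
      _ = ((TT L).card : ℝ≥0∞) * (2 * (ENNReal.ofReal M * E) + ENNReal.ofReal (1 / 162) * A) := by
          rw [Finset.sum_const, nsmul_eq_mul]
      _ ≤ _ := by
          gcongr
          exact_mod_cast TT_card L
  have h81 : 81 * (ENNReal.ofReal (1 / 162) * A) = A / 2 := by
    rw [← mul_assoc, show (81 : ℝ≥0∞) = ENNReal.ofReal 81 by simp, ← ENNReal.ofReal_mul (by norm_num),
      ENNReal.div_eq_inv_mul, show (2 : ℝ≥0∞) = ENNReal.ofReal 2 by simp,
      ← ENNReal.ofReal_inv_of_pos (by norm_num)]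
    norm_num
  have hfinal := absorb A (I + 162 * (ENNReal.ofReal M * E)) hAtop (by
    calc A ≤ _ := hmain
      _ ≤ I + 81 * (2 * (ENNReal.ofReal M * E) + ENNReal.ofReal (1 / 162) * A) := by gcongr
      _ = I + 162 * (ENNReal.ofReal M * E) + 81 * (ENNReal.ofReal (1 / 162) * A) := by ring
      _ = _ := by rw [h81])
  calc A ≤ _ := hfinal
    _ ≤ 2 * I + 324 * (ENNReal.ofReal M * E) + (2 * E + 324 * ENNReal.ofReal M * I) := by
        refine le_trans (le_of_eq ?_) le_self_add
        ring
    _ = (2 + 324 * ENNReal.ofReal M) * (E + I) := by ring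
    _ = _ := by
        rw [ENNReal.ofReal_add (by norm_num) (by positivity), ENNReal.ofReal_mul (by norm_num)]
        simp

lemma ph_eq_tr (a b c : ℝ) (ha : a ≠ 0) (x : Spin3) :
    ph 0 (3 * c / (2 * a)) a (b - 3 * c / (2 * a)) 1 x = tr a b c x := by
  unfold ph
  congr 1
  · ring
  · ring
  · field_simp; ring

lemma ph_bound {R a b c : ℝ} (hR : 1 ≤ R) (ha : R ≤ a) (ha' : a ≤ 4 * R) (hb : |b| ≤ 2 * R)
    (hc : |c| ≤ 14 * R ^ 2) {x : Spin3} (hx : x ∈ Metric.closedBall (0 : Spin3) R)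
    {s : ℝ} (hs : s ∈ Set.Icc (0 : ℝ) 1) :
    (0 + 2 * s * a) ^ 2 + (3 * c / (2 * a) + 2 * s * (b - 3 * c / (2 * a))) ^ 2 ≤ (70 * R) ^ 2 ∧
    ph 0 (3 * c / (2 * a)) a (b - 3 * c / (2 * a)) s x ∈ Metric.closedBall (0 : Spin3) (111 * R ^ 2) := by
  have ha0 : 0 < a := by linarith
  have hxi : ∀ i, |x i| ≤ R := by
    intro i
    have := norm_le_pi_norm x i
    rw [mem_closedBall_zero_iff] at hx
    exact this.trans hx
  obtain ⟨u, hu⟩ : ∃ u, u = 3 * c / (2 * a) := ⟨_, rfl⟩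
  have hua : u * a = 3 / 2 * c := by rw [hu]; field_simp
  have hub : |u| ≤ 21 * R := by
    rw [hu, abs_div, abs_of_pos (by positivity : 0 < 2 * a), div_le_iff₀ (by positivity), abs_mul,
      abs_of_pos (by norm_num : (0 : ℝ) < 3)]
    nlinarith
  rw [← hu]
  obtain ⟨hs0, hs1⟩ := hs
  have hss : s ^ 2 ≤ 1 := by nlinarith
  have hss0 : 0 ≤ s ^ 2 := by positivity
  have hs3 : s ^ 3 ≤ 1 := pow_le_one₀ hs0 hs1
  have hs30 : 0 ≤ s ^ 3 := by positivity
  have hmul : ∀ t y Y : ℝ, 0 ≤ t → t ≤ 1 → |y| ≤ Y → |t * y| ≤ Y := by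
    intro t y Y h0 h1 hy
    rw [abs_mul, abs_of_nonneg h0]
    nlinarith [abs_nonneg y]
  have hw : |b - u| ≤ 23 * R := by
    have := abs_sub b u
    linarith
  have hA : |s ^ 2 * a| ≤ 4 * R := hmul _ _ _ hss0 hss (by rwa [abs_of_pos ha0])
  have hB : |s * u + s ^ 2 * (b - u)| ≤ 44 * R := by
    have h1 := hmul _ _ _ hs0 hs1 hub
    have h2 := hmul _ _ _ hss0 hss hw
    have := abs_add_le (s * u) (s ^ 2 * (b - u))
    linarith
  have hC : |s ^ 3 * c| ≤ 14 * R ^ 2 := hmul _ _ _ hs30 hs3 hc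
  constructor
  · have h1 : |0 + 2 * s * a| ≤ 8 * R := by
      have := hmul s a (4 * R) hs0 hs1 (by rwa [abs_of_pos ha0])
      have e : 0 + 2 * s * a = 2 * (s * a) := by ring
      rw [e, abs_mul, abs_two]; linarith
    have h2 : |u + 2 * s * (b - u)| ≤ 67 * R := by
      have h := hmul s _ _ hs0 hs1 hw
      have e : u + 2 * s * (b - u) = u + 2 * (s * (b - u)) := by ring
      have h3 := abs_add_le u (2 * (s * (b - u)))
      rw [abs_mul, abs_two] at h3
      rw [e]; linarith
    have e1 := sq_le_sq' (abs_le.1 h1).1 (abs_le.1 h1).2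
    have e2 := sq_le_sq' (abs_le.1 h2).1 (abs_le.1 h2).2
    nlinarith
  · have hRR : R ≤ R ^ 2 := by nlinarith
    rw [mem_closedBall_zero_iff, pi_norm_le_iff_of_nonneg (by positivity)]
    intro i
    rw [Real.norm_eq_abs]
    fin_cases i
    · simp [ph, tr]
      have := abs_add_le (x 0) (s ^ 2 * a)
      have := hxi 0
      linarith
    · simp [ph, tr]
      have := abs_add_le (x 1) (s * u + s ^ 2 * (b - u))
      have := hxi 1
      linarith
    · have e : ph 0 u a (b - u) s x 2 = x 2 + s ^ 3 * c -
          2 * (x 0 * (s * u + s ^ 2 * (b - u)) - x 1 * (s ^ 2 * a)) := by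
        simp [ph, tr]
        linear_combination (2 / 3 * s ^ 3) * hua
      change |ph 0 u a (b - u) s x 2| ≤ _
      rw [e]
      have m1 : |x 0 * (s * u + s ^ 2 * (b - u))| ≤ R * (44 * R) := by
        rw [abs_mul]; exact mul_le_mul (hxi 0) hB (abs_nonneg _) (by linarith)
      have m2 : |x 1 * (s ^ 2 * a)| ≤ R * (4 * R) := by
        rw [abs_mul]; exact mul_le_mul (hxi 1) hA (abs_nonneg _) (by linarith)
      have m3 := hxi 2
      rw [abs_le] at *
      constructor <;> nlinarith

lemma step2 {q p α : ℝ} (hq1 : 1 < q) (hp : 2 ≤ p) (hα : 0 < α) (R : ℝ) (hR : 1 ≤ R) :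
    ∃ C : ℝ, 0 ≤ C ∧ ∀ f : Spin3 → ℝ, LocallyLipschitz f → ∃ c : ℝ,
      ∫⁻ x in Metric.closedBall (0 : Spin3) R, ENNReal.ofReal (|f x - c| ^ q) ≤
        ENNReal.ofReal C * ∫⁻ x, ENNReal.ofReal (hGrad f x ^ q) * rho α p x := by
  obtain ⟨B, hB⟩ : ∃ B, ∀ x ∈ Metric.closedBall (0 : Spin3) (111 * R ^ 2), kaplan x ^ p ≤ B := by
    obtain ⟨B, hB⟩ := (isCompact_closedBall (0 : Spin3) (111 * R ^ 2)).bddAbove_image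
      (continuous_kaplan_rpow p (by linarith)).continuousOn
    exact ⟨B, fun x hx => hB (Set.mem_image_of_mem _ hx)⟩
  let G : Set Spin3 := {g | R ≤ g 0 ∧ g 0 ≤ 4 * R ∧ |g 1| ≤ 2 * R ∧ |g 2| ≤ 14 * R ^ 2}
  have hGm : MeasurableSet G := by
    apply IsClosed.measurableSet
    have c : ∀ i, Continuous (fun g : Spin3 => g i) := fun i => continuous_apply i
    exact (isClosed_le continuous_const (c 0)).inter ((isClosed_le (c 0) continuous_const).inter
      ((isClosed_le (c 1).abs continuous_const).inter (isClosed_le (c 2).abs continuous_const)))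
  have hGv : volume G ≠ ⊤ := by
    apply ne_top_of_le_ne_top (measure_closedBall_lt_top (μ := (volume : Measure Spin3)) (x := (0 : Spin3)) (r := 14 * R ^ 2)).ne
    apply measure_mono
    rintro g ⟨h1, h2, h3, h4⟩
    have hRR : R ≤ R ^ 2 := by nlinarith
    rw [mem_closedBall_zero_iff, pi_norm_le_iff_of_nonneg (by positivity)]
    intro i
    rw [Real.norm_eq_abs]
    fin_cases i
    · change |g 0| ≤ _
      rw [abs_of_nonneg (by linarith)]; linarith
    · change |g 1| ≤ _
      linarith
    · exact h4
  let K' : Set Spin3 := Set.Icc ![2 * R, 0, 0] ![2 * R + 1, 1, 1]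
  have hK'v : volume K' = 1 := by
    simp only [K', Real.volume_Icc_pi, Fin.prod_univ_three]
    simp
  have hK'm : MeasurableSet K' := measurableSet_Icc
  refine ⟨((70 * R) ^ q * Real.exp (α * B)) * (volume G).toReal, by positivity, ?_⟩
  intro f hf
  have hfc := hf.continuous
  set E := ∫⁻ x, ENNReal.ofReal (hGrad f x ^ q) * rho α p x with hE
  have hpair : ∀ g ∈ G, ∫⁻ x in Metric.closedBall (0 : Spin3) R,
      ENNReal.ofReal (|f x - f (tr (g 0) (g 1) (g 2) x)| ^ q) ≤
      ENNReal.ofReal ((70 * R) ^ q * Real.exp (α * B)) * E := by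
    rintro g ⟨h1, h2, h3, h4⟩
    have hx0 : (0 : Spin3) ∈ Metric.closedBall (0 : Spin3) R := by simp; linarith
    have key := lemA hf hq1 0 (3 * g 2 / (2 * g 0)) (g 0) (g 1 - 3 * g 2 / (2 * g 0)) (70 * R)
      (fun s hs => (ph_bound hR h1 h2 h3 h4 hx0 hs).1) (by linarith)
      ((Metric.closedBall (0 : Spin3) R).indicator 1) (fun x => ENNReal.ofReal (Real.exp (α * B)) * rho α p x)
      (measurable_one.indicator Metric.isClosed_closedBall.measurableSet)
      ((measurable_rho α p (by linarith)).const_mul _) ?_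
    · rw [← lintegral_indicator Metric.isClosed_closedBall.measurableSet]
      refine le_trans (le_of_eq ?_) (key.trans (le_of_eq ?_))
      · apply lintegral_congr
        intro x
        rw [ph_eq_tr _ _ _ (by linarith)]
        by_cases hx : x ∈ Metric.closedBall (0 : Spin3) R
        · simp only [Set.indicator_of_mem hx, Pi.one_apply, mul_one]
        · simp only [Set.indicator_of_notMem hx, mul_zero]
      · rw [ENNReal.ofReal_mul (by positivity), mul_assoc, hE]
        congr 1
        rw [← lintegral_const_mul' _ _ ENNReal.ofReal_ne_top]
        apply lintegral_congr
        intro x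
        ring
    · intro x s hs
      by_cases hx : x ∈ Metric.closedBall (0 : Spin3) R
      · rw [Set.indicator_of_mem hx, Pi.one_apply, rho, ← ENNReal.ofReal_mul (by positivity), ← Real.exp_add,
          ENNReal.one_le_ofReal]
        have := hB _ (ph_bound hR h1 h2 h3 h4 hx hs).2
        apply Real.one_le_exp
        nlinarith
      · simp only [Set.indicator_of_notMem hx, zero_le]
  have hmeas : Measurable (fun z : Spin3 × Spin3 => ENNReal.ofReal (|f z.2 - f z.1| ^ q)) := by
    have : Continuous (fun z : Spin3 × Spin3 => |f z.2 - f z.1| ^ q) :=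
      ((hfc.comp continuous_snd).sub (hfc.comp continuous_fst)).abs.rpow_const
        (fun _ => Or.inr (by linarith))
    exact this.measurable.ennreal_ofReal
  have hprob : IsProbabilityMeasure (volume.restrict K') := ⟨by simp [hK'v]⟩
  obtain ⟨y, hy⟩ := exists_le_lintegral (μ := volume.restrict K')
    (f := fun y => ∫⁻ x in Metric.closedBall (0 : Spin3) R, ENNReal.ofReal (|f x - f y| ^ q))
    (Measurable.lintegral_prod_right (ν := volume.restrict (Metric.closedBall (0 : Spin3) R)) hmeas).aemeasurable
  refine ⟨f y, hy.trans ?_⟩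
  rw [lintegral_lintegral_swap hmeas.aemeasurable]
  have hctr : Continuous (fun z : Spin3 × Spin3 => tr (z.2 0) (z.2 1) (z.2 2) z.1) := by
    unfold tr
    refine continuous_pi fun i => ?_
    fin_cases i <;> simp <;> fun_prop
  have hmeas2 : Measurable (fun z : Spin3 × Spin3 =>
      ENNReal.ofReal (|f z.1 - f (tr (z.2 0) (z.2 1) (z.2 2) z.1)| ^ q)) :=
    hmeas.comp (hctr.measurable.prodMk measurable_fst)
  calc ∫⁻ x in Metric.closedBall (0 : Spin3) R, ∫⁻ y in K', ENNReal.ofReal (|f x - f y| ^ q)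
      ≤ ∫⁻ x in Metric.closedBall (0 : Spin3) R, ∫⁻ g in G,
          ENNReal.ofReal (|f x - f (tr (g 0) (g 1) (g 2) x)| ^ q) := by
        apply setLIntegral_mono' Metric.isClosed_closedBall.measurableSet
        intro x hx
        rw [← lintegral_indicator hK'm, ← lintegral_indicator hGm]
        have hm1 : Measurable (K'.indicator (fun y => ENNReal.ofReal (|f x - f y| ^ q))) :=
          (hmeas.comp (measurable_id.prodMk measurable_const)).indicator hK'm
        rw [← (mp_tr' x).lintegral_comp hm1]
        apply lintegral_mono
        intro g
        by_cases hg : tr (g 0) (g 1) (g 2) x ∈ K'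
        · have hxi : ∀ i, |x i| ≤ R := by
            intro i
            have := norm_le_pi_norm x i
            rw [mem_closedBall_zero_iff] at hx
            exact this.trans hx
          have hgG : g ∈ G := by
            obtain ⟨l, r⟩ := hg
            have l0 := l 0
            have l1 := l 1
            have l2 := l 2
            have r0 := r 0
            have r1 := r 1
            have r2 := r 2
            simp [tr] at l0 l1 l2 r0 r1 r2
            have x0 := abs_le.1 (hxi 0)
            have x1 := abs_le.1 (hxi 1)
            have x2 := abs_le.1 (hxi 2)
            have g0 : R ≤ g 0 := by linarith
            have g0' : g 0 ≤ 4 * R := by linarith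
            have g1 : |g 1| ≤ 2 * R := by rw [abs_le]; constructor <;> linarith
            refine ⟨g0, g0', g1, ?_⟩
            have m1 : |x 0 * g 1| ≤ R * (2 * R) := by
              rw [abs_mul]; exact mul_le_mul (hxi 0) g1 (abs_nonneg _) (by linarith)
            have m2 : |x 1 * g 0| ≤ R * (4 * R) := by
              rw [abs_mul]; exact mul_le_mul (hxi 1) (by rwa [abs_of_nonneg (by linarith)]) (abs_nonneg _) (by linarith)
            rw [abs_le] at *
            constructor <;> nlinarith
          simp only [Set.indicator_of_mem hg, Set.indicator_of_mem hgG, le_refl]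
        · simp only [Set.indicator_of_notMem hg, zero_le]
    _ = ∫⁻ g in G, ∫⁻ x in Metric.closedBall (0 : Spin3) R,
          ENNReal.ofReal (|f x - f (tr (g 0) (g 1) (g 2) x)| ^ q) :=
        lintegral_lintegral_swap hmeas2.aemeasurable
    _ ≤ ∫⁻ g in G, ENNReal.ofReal ((70 * R) ^ q * Real.exp (α * B)) * E :=
        setLIntegral_mono' hGm hpair
    _ = _ := by
        rw [setLIntegral_const, ENNReal.ofReal_mul (q := (volume G).toReal) (by positivity), ENNReal.ofReal_toReal hGv]
        ring

def TC (c : ℝ) (n : ℕ) (y : ℝ) : ℝ := max (min (y - c) n) (-n)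

lemma lip_TC (c : ℝ) (n : ℕ) : LipschitzWith 1 (TC c n) := by
  have h : LipschitzWith 1 (fun y : ℝ => y - c) :=
    LipschitzWith.of_dist_le_mul (by intro x y; simp)
  exact (h.min_const _).max_const _

lemma TC_abs_le (c : ℝ) (n : ℕ) (y : ℝ) : |TC c n y| ≤ |y - c| := by
  have hn : (0 : ℝ) ≤ n := n.cast_nonneg
  unfold TC
  rw [abs_le]
  have h1 := neg_abs_le (y - c)
  have h2 := le_abs_self (y - c)
  have h0 := abs_nonneg (y - c)
  constructor
  · exact le_max_of_le_left (le_min h1 (by linarith))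
  · exact max_le ((min_le_left _ _).trans h2) (by linarith)

lemma TC_abs_le' (c : ℝ) (n : ℕ) (y : ℝ) : |TC c n y| ≤ n := by
  have hn : (0 : ℝ) ≤ n := n.cast_nonneg
  unfold TC
  rw [abs_le]
  exact ⟨le_max_right _ _, max_le (min_le_right _ _) (by linarith)⟩

lemma TC_eq (c : ℝ) (n : ℕ) (y : ℝ) (h : |y - c| ≤ n) : TC c n y = y - c := by
  rw [abs_le] at h
  unfold TC
  rw [min_eq_left h.2, max_eq_left h.1]

lemma hGrad_congr {f g : Spin3 → ℝ} {x : Spin3} (h : fderiv ℝ f x = fderiv ℝ g x) :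
    hGrad f x = hGrad g x := by
  unfold hGrad X1 X2
  rw [h]

lemma hGrad_TC {f : Spin3 → ℝ} (hf : Continuous f) (c : ℝ) (n : ℕ) (x : Spin3) :
    hGrad (fun x => TC c n (f x)) x ≤ hGrad f x := by
  have hn : (0 : ℝ) ≤ n := n.cast_nonneg
  by_cases hx : |f x - c| < n
  · apply le_of_eq
    apply hGrad_congr
    have : (fun x => TC c n (f x)) =ᶠ[nhds x] (fun x => f x - c) := by
      have ho : IsOpen {x | |f x - c| < n} := isOpen_lt (by fun_prop) continuous_const
      filter_upwards [ho.mem_nhds hx] with z hz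
      exact TC_eq c n _ (le_of_lt hz)
    rw [this.fderiv_eq, fderiv_sub_const]
  · have h0 : fderiv ℝ (fun x => TC c n (f x)) x = 0 := by
      rw [not_lt, le_abs] at hx
      rcases hx with hx | hx
      · apply IsLocalMax.fderiv_eq_zero
        refine Filter.Eventually.of_forall fun z => ?_
        have e : TC c n (f x) = n := by
          unfold TC; rw [min_eq_right hx, max_eq_left (by linarith)]
        change TC c n (f z) ≤ TC c n (f x)
        rw [e]; exact (abs_le.1 (TC_abs_le' c n _)).2
      · apply IsLocalMin.fderiv_eq_zero
        refine Filter.Eventually.of_forall fun z => ?_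
        have e : TC c n (f x) = -n := by
          unfold TC; rw [max_eq_right]
          exact (min_le_left _ _).trans (by linarith)
        change TC c n (f x) ≤ TC c n (f z)
        rw [e]; exact (abs_le.1 (TC_abs_le' c n _)).1
    have : hGrad (fun x => TC c n (f x)) x = 0 := by
      unfold hGrad X1 X2
      rw [h0]; simp
    rw [this]; exact hGrad_nonneg f x

lemma step3 {q p α : ℝ} (hq1 : 1 < q) (hq2 : q ≤ 2) (hp : 2 ≤ p) (hα : 0 < α)
    (hfin : ∫⁻ x, rho α p x ≠ ⊤) :
    ∃ C : ℝ, 0 < C ∧ ∀ f : Spin3 → ℝ, LocallyLipschitz f → ∃ c : ℝ,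
      ∫⁻ x, ENNReal.ofReal (|f x - c| ^ q) * rho α p x ≤
        ENNReal.ofReal C * (∫⁻ x, ENNReal.ofReal (hGrad f x ^ q) * rho α p x) := by
  obtain ⟨R, C1, hR, hC1, h1⟩ := step1 hq1 hq2 hp hα hfin
  obtain ⟨C2, hC2, h2⟩ := step2 hq1 hp hα R hR
  refine ⟨C1 * (1 + C2), by positivity, ?_⟩
  intro f hf
  obtain ⟨c, hc⟩ := h2 f hf
  refine ⟨c, ?_⟩
  set E := ∫⁻ x, ENNReal.ofReal (hGrad f x ^ q) * rho α p x with hE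
  have hq0 : 0 ≤ q := by linarith
  have hb : ∀ n : ℕ, ∫⁻ x, ENNReal.ofReal (|TC c n (f x)| ^ q) * rho α p x ≤
      ENNReal.ofReal (C1 * (1 + C2)) * E := by
    intro n
    refine (h1 _ ((lip_TC c n).locallyLipschitz.comp hf) ⟨n, fun x => TC_abs_le' c n _⟩).trans ?_
    rw [ENNReal.ofReal_mul (by linarith), mul_assoc, ENNReal.ofReal_add zero_le_one hC2, add_mul,
      ENNReal.ofReal_one, one_mul]
    refine mul_le_mul_right (add_le_add ?_ ?_) _
    · apply lintegral_mono
      intro x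
      refine mul_le_mul_left (ENNReal.ofReal_le_ofReal ?_) _
      exact Real.rpow_le_rpow (hGrad_nonneg _ _) (hGrad_TC hf.continuous c n x) hq0
    · refine le_trans (lintegral_mono fun x => ENNReal.ofReal_le_ofReal ?_) hc
      exact Real.rpow_le_rpow (abs_nonneg _) (TC_abs_le c n _) hq0
  have hm : ∀ n : ℕ, Measurable (fun x => ENNReal.ofReal (|TC c n (f x)| ^ q) * rho α p x) := by
    intro n
    refine Measurable.mul ?_ (measurable_rho α p (by linarith))
    have : Continuous (fun x => |TC c n (f x)| ^ q) :=
      ((lip_TC c n).continuous.comp hf.continuous).abs.rpow_const (fun _ => Or.inr hq0)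
    exact this.measurable.ennreal_ofReal
  calc ∫⁻ x, ENNReal.ofReal (|f x - c| ^ q) * rho α p x
      = ∫⁻ x, liminf (fun n : ℕ => ENNReal.ofReal (|TC c n (f x)| ^ q) * rho α p x) atTop := by
        apply lintegral_congr
        intro x
        symm
        apply Tendsto.liminf_eq
        apply tendsto_const_nhds.congr'
        obtain ⟨N, hN⟩ := exists_nat_ge (|f x - c|)
        filter_upwards [eventually_ge_atTop N] with n hn
        rw [TC_eq c n _ (hN.trans (by exact_mod_cast hn))]
    _ ≤ liminf (fun n : ℕ => ∫⁻ x, ENNReal.ofReal (|TC c n (f x)| ^ q) * rho α p x) atTop :=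
        lintegral_liminf_le hm
    _ ≤ liminf (fun _ : ℕ => ENNReal.ofReal (C1 * (1 + C2)) * E) atTop :=
        liminf_le_liminf (Eventually.of_forall hb)
    _ = _ := liminf_const _
/-- **q-spectral gap inequality for the Kaplan measure.** For `q ∈ (1,2]`,
`p = q/(q−1)` and `α > 0`, the measure `dν = Z⁻¹e^{−αN^p}dx` satisfies
`∫ |f − ∫ f dν|^q dν ≤ C ∫ |∇f|^q dν` for all locally Lipschitz `f` with
`∫ |∇f|^q dν < ∞`. -/
theorem kaplan_q_spectral_gap (q p α Z : ℝ) (hq1 : 1 < q) (hq2 : q ≤ 2)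
    (hp : p = q / (q - 1)) (hα : 0 < α)
    (hZ : Z = ∫ x : Spin3, Real.exp (-(α * kaplan x ^ p)))
    (hZpos : 0 < Z)
    (hZint : Integrable fun x : Spin3 => Real.exp (-(α * kaplan x ^ p))) :
    ∃ C : ℝ, 0 < C ∧
      ∀ f : Spin3 → ℝ, LocallyLipschitz f →
        (∫⁻ x, ENNReal.ofReal (hGrad f x ^ q) ∂(nuKaplan α p Z)) ≠ ⊤ →
        ∫⁻ x, ENNReal.ofReal (|f x - ∫ y, f y ∂(nuKaplan α p Z)| ^ q) ∂(nuKaplan α p Z) ≤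
          ENNReal.ofReal C * ∫⁻ x, ENNReal.ofReal (hGrad f x ^ q) ∂(nuKaplan α p Z) := by
  have hp2 : 2 ≤ p := by
    rw [hp, le_div_iff₀ (by linarith)]; linarith
  have hq0 : 0 ≤ q := by linarith
  have hlZ : ∫⁻ x, rho α p x = ENNReal.ofReal Z := by
    rw [hZ, ofReal_integral_eq_lintegral_ofReal hZint
      (Eventually.of_forall fun x => (Real.exp_pos _).le)]
    rfl
  have hZ0 : ENNReal.ofReal Z ≠ 0 := by simpa using hZpos
  obtain ⟨C, hC, h3⟩ := step3 hq1 hq2 hp2 hα (by rw [hlZ]; exact ENNReal.ofReal_ne_top)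
  have hnu : ∀ F : Spin3 → ℝ≥0∞, Measurable F →
      ∫⁻ x, F x ∂(nuKaplan α p Z) = (ENNReal.ofReal Z)⁻¹ * ∫⁻ x, F x * rho α p x := by
    intro F hF
    unfold nuKaplan
    rw [lintegral_smul_measure]
    change _ * ∫⁻ x, F x ∂(volume.withDensity (rho α p)) = _
    rw [lintegral_withDensity_eq_lintegral_mul _ (measurable_rho α p (by linarith)) hF]
    congr 1
    apply lintegral_congr
    intro x
    exact mul_comm _ _
  have hprob : IsProbabilityMeasure (nuKaplan α p Z) := by
    constructor
    have := hnu 1 measurable_one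
    simp only [Pi.one_apply, lintegral_one, one_mul, hlZ] at this
    rw [this, ENNReal.inv_mul_cancel hZ0 ENNReal.ofReal_ne_top]
  refine ⟨4 * C, by positivity, ?_⟩
  intro f hf hE
  obtain ⟨c, hc⟩ := h3 f hf
  have hfc := hf.continuous
  have hmd : ∀ a : ℝ, Measurable (fun x => ENNReal.ofReal (|f x - a| ^ q)) := by
    intro a
    have : Continuous (fun x => |f x - a| ^ q) :=
      (hfc.sub continuous_const).abs.rpow_const (fun _ => Or.inr hq0)
    exact this.measurable.ennreal_ofReal
  have hmg : Measurable (fun x => ENNReal.ofReal (hGrad f x ^ q)) :=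
    ((measurable_hGrad f).pow_const q).ennreal_ofReal
  have hc' : ∫⁻ x, ENNReal.ofReal (|f x - c| ^ q) ∂(nuKaplan α p Z) ≤
      ENNReal.ofReal C * ∫⁻ x, ENNReal.ofReal (hGrad f x ^ q) ∂(nuKaplan α p Z) := by
    rw [hnu _ (hmd c), hnu _ hmg, mul_left_comm]
    exact mul_le_mul_right hc _
  generalize nuKaplan α p Z = ν at *
  set E := ∫⁻ x, ENNReal.ofReal (hGrad f x ^ q) ∂ν with hEdef
  have hfin : ∫⁻ x, ENNReal.ofReal (|f x - c| ^ q) ∂ν ≠ ⊤ :=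
    ne_top_of_le_ne_top (ENNReal.mul_ne_top ENNReal.ofReal_ne_top hE) hc'
  have hjen : (∫⁻ x, ‖f x - c‖ₑ ∂ν) ^ q ≤ ∫⁻ x, ENNReal.ofReal (|f x - c| ^ q) ∂ν := by
    refine (jensen ν hq1 (hfc.sub continuous_const).measurable.enorm.aemeasurable).trans (le_of_eq ?_)
    apply lintegral_congr
    intro x
    rw [ofReal_rpow_abs _ _ hq0]
    rfl
  have hint : Integrable (fun x => f x - c) ν := by
    refine ⟨(hfc.sub continuous_const).aestronglyMeasurable, ?_⟩
    rw [HasFiniteIntegral, lt_top_iff_ne_top]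
    intro htop
    rw [htop, ENNReal.top_rpow_of_pos (by linarith), top_le_iff] at hjen
    exact hfin hjen
  have hintf : Integrable f ν := by
    have := hint.add (integrable_const c)
    refine this.congr (Eventually.of_forall fun x => ?_)
    change f x - c + c = f x
    ring
  have hmc : (∫ y, f y ∂ν) - c = ∫ y, (f y - c) ∂ν := by
    rw [integral_sub hintf (integrable_const c)]; simp
  set m := ∫ y, f y ∂ν with hm
  have hmq : ENNReal.ofReal (|c - m| ^ q) ≤ ∫⁻ x, ENNReal.ofReal (|f x - c| ^ q) ∂ν := by
    rw [abs_sub_comm, ofReal_rpow_abs _ _ hq0, hmc]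
    exact (ENNReal.rpow_le_rpow (enorm_integral_le_lintegral_enorm _) hq0).trans hjen
  calc ∫⁻ x, ENNReal.ofReal (|f x - m| ^ q) ∂ν
      ≤ ∫⁻ x, 2 * (ENNReal.ofReal (|f x - c| ^ q) + ENNReal.ofReal (|c - m| ^ q)) ∂ν := by
        apply lintegral_mono
        intro x
        have := convex_q (f x - m) (c - m) q hq1 hq2
        rwa [sub_sub_sub_cancel_right] at this
    _ = 2 * (∫⁻ x, ENNReal.ofReal (|f x - c| ^ q) ∂ν + ENNReal.ofReal (|c - m| ^ q)) := by
        rw [lintegral_const_mul' _ _ (by norm_num), lintegral_add_right _ measurable_const]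
        simp
    _ ≤ 2 * (ENNReal.ofReal C * E + ENNReal.ofReal C * E) := by
        exact mul_le_mul_right (add_le_add hc' (hmq.trans hc')) _
    _ = _ := by
        rw [ENNReal.ofReal_mul (by norm_num)]
        have : ENNReal.ofReal 4 = 4 := by norm_num
        rw [this]; ring
end
end

section
/- Let α > 0, p > 3 and q ≥ 2. There exists a constant C ∈ (0,∞), depending only on α, p, q, such that for every locally Lipschitz g : ℝ³ → ℝ one has ∫ |g|^q N^{p−3} e^{−α N^p} dx ≤ C ∫ (|∇g|^q + |g|^q) e^{−α N^p} dx, where ∇ is the Heisenberg sub-gradient; moreover the function η = N^{p−3} is continuous, nonnegative and diverges to infinity in all directions (η(x) → ∞ as |x| → ∞). -/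
open MeasureTheory Filter
open scoped ENNReal

noncomputable section

lemma ll_mul {f g : Spin3 → ℝ} (hf : LocallyLipschitz f) (hg : LocallyLipschitz g) :
    LocallyLipschitz (fun x => f x * g x) := by
  have h : ContDiff ℝ 1 (fun p : ℝ × ℝ => p.1 * p.2) := by fun_prop
  exact h.locallyLipschitz.comp (hf.prodMk hg)

lemma ll_lip {f : Spin3 → ℝ} (hf : LocallyLipschitz f) (hc : HasCompactSupport f) :
    ∃ C, LipschitzWith C f := by
  obtain ⟨R, hR⟩ := hc.isCompact.isBounded.subset_closedBall (0 : Spin3)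
  have hK : IsCompact (Metric.closedBall (0 : Spin3) (R + 1)) := isCompact_closedBall _ _
  obtain ⟨C, hC⟩ := (hf.locallyLipschitzOn (s := Metric.closedBall (0 : Spin3) (R + 1))).exists_lipschitzOnWith_of_compact hK
  obtain ⟨M, hM⟩ := hc.exists_bound_of_continuous hf.continuous
  have hM0 : 0 ≤ M := (norm_nonneg _).trans (hM 0)
  have hz : ∀ x : Spin3, R < ‖x‖ → f x = 0 := by
    intro x hx
    by_contra h
    have := hR (subset_tsupport f h)
    simp at this
    linarith
  have key : ∀ x y : Spin3, ‖x‖ ≤ R → R + 1 < ‖y‖ → |f x - f y| ≤ (C + M) * dist x y := by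
    intro x y hx hy
    rw [hz y (by linarith), sub_zero]
    have h1 : 1 ≤ dist x y := by
      rw [dist_comm, dist_eq_norm]
      have := norm_sub_norm_le y x
      linarith
    have h2 := hM x
    rw [Real.norm_eq_abs] at h2
    have : (0:ℝ) ≤ C := C.2
    nlinarith
  refine ⟨C + M.toNNReal, LipschitzWith.of_dist_le_mul fun x y => ?_⟩
  rw [Real.dist_eq]
  push_cast
  rw [Real.coe_toNNReal M hM0]
  have hd : 0 ≤ dist x y := dist_nonneg
  have hC0 : (0:ℝ) ≤ C := C.2
  by_cases hx : ‖x‖ ≤ R + 1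
  · by_cases hy : ‖y‖ ≤ R + 1
    · have := hC.dist_le_mul x (by simpa using hx) y (by simpa using hy)
      rw [Real.dist_eq] at this
      nlinarith
    · push Not at hy
      by_cases hx' : ‖x‖ ≤ R
      · exact key x y hx' hy
      · rw [hz x (by linarith), hz y (by linarith)]; simp; positivity
  · push Not at hx
    by_cases hy' : ‖y‖ ≤ R
    · rw [abs_sub_comm, dist_comm]; exact key y x hy' hx
    · rw [hz x (by linarith), hz y (by linarith)]; simp; positivity

lemma int_fderiv {f : Spin3 → ℝ} (hf : LocallyLipschitz f) (hc : HasCompactSupport f) (v : Spin3) :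
    Integrable (fun x => fderiv ℝ f x v) ∧ ∫ x, fderiv ℝ f x v = 0 := by
  obtain ⟨C, hC⟩ := ll_lip hf hc
  have hI : Integrable (fun x => fderiv ℝ f x v) := by
    have hb : ∀ x, ‖fderiv ℝ f x v‖ ≤ C * ‖v‖ := fun x =>
      (ContinuousLinearMap.le_opNorm _ _).trans
        (mul_le_mul_of_nonneg_right (norm_fderiv_le_of_lipschitz ℝ hC) (norm_nonneg _))
    have hs : Function.support (fun x => fderiv ℝ f x v) ⊆ tsupport f := by
      intro x hx
      have h1 : fderiv ℝ f x ≠ 0 := by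
        intro h; apply hx; simp [h]
      exact support_fderiv_subset ℝ h1
    rw [← integrableOn_iff_integrable_of_support_subset hs]
    refine Measure.integrableOn_of_bounded (M := C * ‖v‖) hc.isCompact.measure_lt_top.ne ?_ (Eventually.of_forall hb)
    exact (measurable_fderiv_apply_const ℝ f v).aestronglyMeasurable
  refine ⟨hI, ?_⟩
  have h := LipschitzWith.integral_lineDeriv_mul_eq (μ := volume) (f := fun _ : Spin3 => (1:ℝ)) (LipschitzWith.const 1) hC hc (-v)
  have hd := hC.ae_differentiableAt (μ := volume)
  have h0 : ∀ x w : Spin3, lineDeriv ℝ (fun _ : Spin3 => (1:ℝ)) x w = 0 := by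
    intro x w; simp [lineDeriv]
  simp only [h0, neg_neg, mul_one, zero_mul, integral_zero] at h
  rw [h]
  apply integral_congr_ae
  filter_upwards [hd] with x hx
  exact hx.lineDeriv_eq_fderiv.symm

lemma X1_mul {f g : Spin3 → ℝ} {x : Spin3} (hf : DifferentiableAt ℝ f x) (hg : DifferentiableAt ℝ g x) :
    X1 (fun y => f y * g y) x = X1 f x * g x + f x * X1 g x := by
  unfold X1
  rw [(hf.hasFDerivAt.fun_mul hg.hasFDerivAt).fderiv]
  simp; ring

lemma X2_mul {f g : Spin3 → ℝ} {x : Spin3} (hf : DifferentiableAt ℝ f x) (hg : DifferentiableAt ℝ g x) :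
    X2 (fun y => f y * g y) x = X2 f x * g x + f x * X2 g x := by
  unfold X2
  rw [(hf.hasFDerivAt.fun_mul hg.hasFDerivAt).fderiv]
  simp; ring

lemma X1_add {f g : Spin3 → ℝ} {x : Spin3} (hf : DifferentiableAt ℝ f x) (hg : DifferentiableAt ℝ g x) :
    X1 (fun y => f y + g y) x = X1 f x + X1 g x := by
  unfold X1
  rw [(hf.hasFDerivAt.fun_add hg.hasFDerivAt).fderiv]
  simp; ring

lemma X2_add {f g : Spin3 → ℝ} {x : Spin3} (hf : DifferentiableAt ℝ f x) (hg : DifferentiableAt ℝ g x) :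
    X2 (fun y => f y + g y) x = X2 f x + X2 g x := by
  unfold X2
  rw [(hf.hasFDerivAt.fun_add hg.hasFDerivAt).fderiv]
  simp; ring

lemma X1_sub {f g : Spin3 → ℝ} {x : Spin3} (hf : DifferentiableAt ℝ f x) (hg : DifferentiableAt ℝ g x) :
    X1 (fun y => f y - g y) x = X1 f x - X1 g x := by
  unfold X1
  rw [(hf.hasFDerivAt.fun_sub hg.hasFDerivAt).fderiv]
  simp; ring

lemma X2_sub {f g : Spin3 → ℝ} {x : Spin3} (hf : DifferentiableAt ℝ f x) (hg : DifferentiableAt ℝ g x) :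
    X2 (fun y => f y - g y) x = X2 f x - X2 g x := by
  unfold X2
  rw [(hf.hasFDerivAt.fun_sub hg.hasFDerivAt).fderiv]
  simp; ring

lemma X1_comp {f : Spin3 → ℝ} {φ : ℝ → ℝ} {φ' : ℝ} {x : Spin3} (hφ : HasDerivAt φ φ' (f x))
    (hf : DifferentiableAt ℝ f x) : X1 (fun y => φ (f y)) x = φ' * X1 f x := by
  unfold X1
  rw [show (fun y => φ (f y)) = φ ∘ f from rfl, (hφ.comp_hasFDerivAt x hf.hasFDerivAt).fderiv]
  simp; ring

lemma X2_comp {f : Spin3 → ℝ} {φ : ℝ → ℝ} {φ' : ℝ} {x : Spin3} (hφ : HasDerivAt φ φ' (f x))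
    (hf : DifferentiableAt ℝ f x) : X2 (fun y => φ (f y)) x = φ' * X2 f x := by
  unfold X2
  rw [show (fun y => φ (f y)) = φ ∘ f from rfl, (hφ.comp_hasFDerivAt x hf.hasFDerivAt).fderiv]
  simp; ring

lemma fderiv_coord (i : Fin 3) (x : Spin3) :
    fderiv ℝ (fun y : Spin3 => y i) x = ContinuousLinearMap.proj i :=
  (ContinuousLinearMap.proj (R := ℝ) (φ := fun _ : Fin 3 => ℝ) i).hasFDerivAt.fderiv

lemma X1_c0 (x : Spin3) : X1 (fun y => y 0) x = 1 := by simp [X1, fderiv_coord]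
lemma X1_c1 (x : Spin3) : X1 (fun y => y 1) x = 0 := by simp [X1, fderiv_coord]
lemma X1_c2 (x : Spin3) : X1 (fun y => y 2) x = 2 * x 1 := by simp [X1, fderiv_coord]
lemma X2_c0 (x : Spin3) : X2 (fun y => y 0) x = 0 := by simp [X2, fderiv_coord]
lemma X2_c1 (x : Spin3) : X2 (fun y => y 1) x = 1 := by simp [X2, fderiv_coord]
lemma X2_c2 (x : Spin3) : X2 (fun y => y 2) x = -(2 * x 0) := by simp [X2, fderiv_coord]
lemma X1_const (c : ℝ) (x : Spin3) : X1 (fun _ => c) x = 0 := by simp [X1]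
lemma X2_const (c : ℝ) (x : Spin3) : X2 (fun _ => c) x = 0 := by simp [X2]

lemma hasCS_mul {f g : Spin3 → ℝ} (hc : HasCompactSupport g) : HasCompactSupport (fun x => f x * g x) :=
  hc.mul_left

lemma int_X1 {f : Spin3 → ℝ} (hf : LocallyLipschitz f) (hc : HasCompactSupport f) :
    Integrable (fun x => X1 f x) ∧ ∫ x, X1 f x = 0 := by
  have hl : ContDiff ℝ 1 (fun x : Spin3 => 2 * x 1) := by fun_prop
  have h1 := int_fderiv hf hc (Pi.single 0 1)
  have h2 := int_fderiv (ll_mul hl.locallyLipschitz hf) (hasCS_mul hc) (Pi.single 2 1)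
  obtain ⟨C, hC⟩ := ll_lip hf hc
  have he : (fun x => X1 f x) =ᵐ[volume] fun x => fderiv ℝ f x (Pi.single 0 1) +
      fderiv ℝ (fun x : Spin3 => 2 * x 1 * f x) x (Pi.single 2 1) := by
    filter_upwards [hC.ae_differentiableAt (μ := volume)] with x hx
    unfold X1
    have hd : HasFDerivAt (fun x : Spin3 => 2 * x 1) ((2:ℝ) • (ContinuousLinearMap.proj (R := ℝ) (φ := fun _ : Fin 3 => ℝ) 1)) x :=
      (ContinuousLinearMap.proj (R := ℝ) (φ := fun _ : Fin 3 => ℝ) 1).hasFDerivAt.const_mul 2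
    rw [(hd.fun_mul hx.hasFDerivAt).fderiv]
    simp
  refine ⟨(integrable_congr he).2 (h1.1.add h2.1), ?_⟩
  rw [integral_congr_ae he, integral_add h1.1 h2.1, h1.2, h2.2, add_zero]

lemma int_X2 {f : Spin3 → ℝ} (hf : LocallyLipschitz f) (hc : HasCompactSupport f) :
    Integrable (fun x => X2 f x) ∧ ∫ x, X2 f x = 0 := by
  have hl : ContDiff ℝ 1 (fun x : Spin3 => 2 * x 0) := by fun_prop
  have h1 := int_fderiv hf hc (Pi.single 1 1)
  have h2 := int_fderiv (ll_mul hl.locallyLipschitz hf) (hasCS_mul hc) (Pi.single 2 1)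
  obtain ⟨C, hC⟩ := ll_lip hf hc
  have he : (fun x => X2 f x) =ᵐ[volume] fun x => fderiv ℝ f x (Pi.single 1 1) -
      fderiv ℝ (fun x : Spin3 => 2 * x 0 * f x) x (Pi.single 2 1) := by
    filter_upwards [hC.ae_differentiableAt (μ := volume)] with x hx
    unfold X2
    have hd : HasFDerivAt (fun x : Spin3 => 2 * x 0) ((2:ℝ) • (ContinuousLinearMap.proj (R := ℝ) (φ := fun _ : Fin 3 => ℝ) 0)) x :=
      (ContinuousLinearMap.proj (R := ℝ) (φ := fun _ : Fin 3 => ℝ) 0).hasFDerivAt.const_mul 2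
    rw [(hd.fun_mul hx.hasFDerivAt).fderiv]
    simp
  refine ⟨(integrable_congr he).2 (h1.1.sub h2.1), ?_⟩
  rw [integral_congr_ae he, integral_sub h1.1 h2.1, h1.2, h2.2, sub_zero]

/-- The fourth power of the Kaplan norm. -/
def KP (x : Spin3) : ℝ := (x 0 ^ 2 + x 1 ^ 2) ^ 2 + 16 * x 2 ^ 2

lemma KP_nonneg (x : Spin3) : 0 ≤ KP x := by unfold KP; positivity

lemma KP_contDiff : ContDiff ℝ ⊤ KP := by unfold KP; fun_prop

lemma KP_diff (x : Spin3) : DifferentiableAt ℝ KP x := (KP_contDiff.differentiable (by simp)) x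

lemma X1_pow {f : Spin3 → ℝ} {x : Spin3} (n : ℕ) (hf : DifferentiableAt ℝ f x) :
    X1 (fun y => f y ^ n) x = n * f x ^ (n - 1) * X1 f x :=
  X1_comp (hasDerivAt_pow n (f x)) hf

lemma X2_pow {f : Spin3 → ℝ} {x : Spin3} (n : ℕ) (hf : DifferentiableAt ℝ f x) :
    X2 (fun y => f y ^ n) x = n * f x ^ (n - 1) * X2 f x :=
  X2_comp (hasDerivAt_pow n (f x)) hf

lemma X1_KP (x : Spin3) : X1 KP x = 4 * (x 0 ^ 2 + x 1 ^ 2) * x 0 + 64 * x 1 * x 2 := by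
  unfold KP
  rw [X1_add (by fun_prop) (by fun_prop), X1_pow _ (by fun_prop), X1_add (by fun_prop) (by fun_prop),
    X1_pow _ (by fun_prop), X1_pow _ (by fun_prop), X1_mul (by fun_prop) (by fun_prop), X1_const,
    X1_pow _ (by fun_prop), X1_c0, X1_c1, X1_c2]
  norm_num; ring

lemma X2_KP (x : Spin3) : X2 KP x = 4 * (x 0 ^ 2 + x 1 ^ 2) * x 1 - 64 * x 0 * x 2 := by
  unfold KP
  rw [X2_add (by fun_prop) (by fun_prop), X2_pow _ (by fun_prop), X2_add (by fun_prop) (by fun_prop),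
    X2_pow _ (by fun_prop), X2_pow _ (by fun_prop), X2_mul (by fun_prop) (by fun_prop), X2_const,
    X2_pow _ (by fun_prop), X2_c0, X2_c1, X2_c2]
  norm_num; ring

lemma X1_X1_KP (x : Spin3) : X1 (fun y => X1 KP y) x = 4 * (3 * x 0 ^ 2 + x 1 ^ 2) + 128 * x 1 ^ 2 := by
  simp only [X1_KP]
  rw [X1_add (by fun_prop) (by fun_prop), X1_mul (by fun_prop) (by fun_prop),
    X1_mul (by fun_prop) (by fun_prop), X1_const, X1_add (by fun_prop) (by fun_prop),
    X1_pow _ (by fun_prop), X1_pow _ (by fun_prop), X1_mul (by fun_prop) (by fun_prop),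
    X1_mul (by fun_prop) (by fun_prop), X1_const, X1_c0, X1_c1, X1_c2]
  norm_num; ring

lemma X2_X2_KP (x : Spin3) : X2 (fun y => X2 KP y) x = 4 * (3 * x 1 ^ 2 + x 0 ^ 2) + 128 * x 0 ^ 2 := by
  simp only [X2_KP]
  rw [X2_sub (by fun_prop) (by fun_prop), X2_mul (by fun_prop) (by fun_prop),
    X2_mul (by fun_prop) (by fun_prop), X2_const, X2_add (by fun_prop) (by fun_prop),
    X2_pow _ (by fun_prop), X2_pow _ (by fun_prop), X2_mul (by fun_prop) (by fun_prop),
    X2_mul (by fun_prop) (by fun_prop), X2_const, X2_c0, X2_c1, X2_c2]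
  norm_num; ring

/-- Auxiliary one-variable function. -/
def BB (α β s c ε P : ℝ) : ℝ :=
  16 * α * β * P ^ β * (1 + P) ^ (s - 1 / 4) - 4 * α * β * P ^ (β - 1 / 2) * (1 + P) ^ s
    - c * (1 + P) ^ (s - 1 / 4) - 512 * ε * (1 + P) ^ (2 * s - 1 / 2) * P - 2 * ε * (1 + P) ^ (2 * s)

lemma BB_eventually (α β s c ε : ℝ) (hα : 0 < α) (hs : 0 < s) (hβ : β = s + 3 / 4)
    (hε : ε = α * β / 64) : ∀ᶠ P in atTop, 0 ≤ BB α β s c ε P := by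
  have hβ0 : 0 < β := by linarith
  have hQ : Tendsto (fun P : ℝ => 1 + P) atTop atTop := tendsto_atTop_add_const_left _ _ tendsto_id
  have hu : Tendsto (fun P : ℝ => P / (1 + P)) atTop (nhds 1) := by
    have h1 : Tendsto (fun P : ℝ => 1 - (1 + P)⁻¹) atTop (nhds (1 - 0)) :=
      tendsto_const_nhds.sub (tendsto_inv_atTop_zero.comp hQ)
    rw [sub_zero] at h1
    refine h1.congr' ?_
    filter_upwards [eventually_gt_atTop 0] with P hP
    field_simp
    ring
  have hup : ∀ e : ℝ, Tendsto (fun P : ℝ => (P / (1 + P)) ^ e) atTop (nhds 1) := by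
    intro e
    have := hu.rpow_const (p := e) (Or.inl one_ne_zero)
    rwa [Real.one_rpow] at this
  have hn : ∀ e : ℝ, 0 < e → Tendsto (fun P : ℝ => (1 + P) ^ (-e)) atTop (nhds 0) :=
    fun e he => (tendsto_rpow_neg_atTop he).comp hQ
  have hT : Tendsto (fun P : ℝ => 16 * α * β * (P / (1 + P)) ^ β
      - 4 * α * β * ((P / (1 + P)) ^ (β - 1 / 2) * (1 + P) ^ (-(1 / 4 : ℝ)))
      - c * (1 + P) ^ (-(s + 3 / 4)) - 512 * ε * (P / (1 + P)) - 2 * ε * (1 + P) ^ (-(1 / 2 : ℝ)))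
      atTop (nhds (16 * α * β * 1 - 4 * α * β * (1 * 0) - c * 0 - 512 * ε * 1 - 2 * ε * 0)) :=
    (((((hup β).const_mul _).sub (((hup _).mul (hn _ (by norm_num))).const_mul _)).sub
      ((hn _ (by linarith)).const_mul _)).sub (hu.const_mul _)).sub ((hn _ (by norm_num)).const_mul _)
  have hpos : 0 < 16 * α * β * 1 - 4 * α * β * (1 * 0) - c * 0 - 512 * ε * 1 - 2 * ε * 0 := by
    rw [hε]; have := mul_pos hα hβ0; nlinarith
  filter_upwards [hT.eventually (lt_mem_nhds hpos), eventually_gt_atTop 0] with P h hP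
  have hQ0 : 0 < 1 + P := by linarith
  have h2 := mul_nonneg (Real.rpow_pos_of_pos hQ0 (2 * s + 1 / 2)).le h.le
  refine h2.trans_eq ?_
  unfold BB
  rw [Real.div_rpow hP.le hQ0.le, Real.div_rpow hP.le hQ0.le]
  have e1 : (1 + P) ^ (2 * s + 1 / 2) = (1 + P) ^ (s - 1 / 4) * (1 + P) ^ β := by
    rw [← Real.rpow_add hQ0]; congr 1; linarith
  have e2 : (1 + P) ^ (2 * s + 1 / 2) * (1 + P) ^ (-(1 / 4 : ℝ)) = (1 + P) ^ s * (1 + P) ^ (β - 1 / 2) := by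
    rw [← Real.rpow_add hQ0, ← Real.rpow_add hQ0]; congr 1; linarith
  have e3 : (1 + P) ^ (2 * s + 1 / 2) * (1 + P) ^ (-(s + 3 / 4)) = (1 + P) ^ (s - 1 / 4) := by
    rw [← Real.rpow_add hQ0]; congr 1; linarith
  have e4 : (1 + P) ^ (2 * s + 1 / 2) = (1 + P) ^ (2 * s - 1 / 2) * (1 + P) := by
    nth_rw 3 [← Real.rpow_one (1 + P)]
    rw [← Real.rpow_add hQ0]; congr 1; linarith
  have e5 : (1 + P) ^ (2 * s + 1 / 2) * (1 + P) ^ (-(1 / 2 : ℝ)) = (1 + P) ^ (2 * s) := by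
    rw [← Real.rpow_add hQ0]; congr 1; linarith
  have hb1 : (1 + P) ^ β ≠ 0 := (Real.rpow_pos_of_pos hQ0 _).ne'
  have hb2 : (1 + P) ^ (β - 1 / 2) ≠ 0 := (Real.rpow_pos_of_pos hQ0 _).ne'
  have t1 : (1 + P) ^ (2 * s + 1 / 2) * (P ^ β / (1 + P) ^ β) = P ^ β * (1 + P) ^ (s - 1 / 4) := by
    rw [e1]; field_simp
  have t2 : (1 + P) ^ (2 * s + 1 / 2) * (P ^ (β - 1 / 2) / (1 + P) ^ (β - 1 / 2) * (1 + P) ^ (-(1 / 4 : ℝ)))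
      = P ^ (β - 1 / 2) * (1 + P) ^ s := by
    rw [show (1 + P) ^ (2 * s + 1 / 2) * (P ^ (β - 1 / 2) / (1 + P) ^ (β - 1 / 2) * (1 + P) ^ (-(1 / 4 : ℝ)))
      = P ^ (β - 1 / 2) / (1 + P) ^ (β - 1 / 2) * ((1 + P) ^ (2 * s + 1 / 2) * (1 + P) ^ (-(1 / 4 : ℝ))) by ring, e2]
    field_simp
  have t4 : (1 + P) ^ (2 * s + 1 / 2) * (P / (1 + P)) = (1 + P) ^ (2 * s - 1 / 2) * P := by
    rw [e4]; field_simp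
  linear_combination 16 * α * β * t1 - 4 * α * β * t2 - c * e3 - 512 * ε * t4 - 2 * ε * e5

lemma BB_bound (α β s c ε : ℝ) (hα : 0 < α) (hs : 0 < s) (hβ : β = s + 3 / 4)
    (hε : ε = α * β / 64) : ∃ C : ℝ, 0 ≤ C ∧ ∀ P r : ℝ, 0 ≤ P → 0 ≤ r → r ≤ Real.sqrt P →
      -C ≤ r * BB α β s c ε P := by
  obtain ⟨R, hR⟩ := eventually_atTop.1 (BB_eventually α β s c ε hα hs hβ hε)
  have hcont : ContinuousOn (fun P => Real.sqrt P * BB α β s c ε P) (Set.Icc 0 R) := by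
    have hq : ∀ e : ℝ, ContinuousOn (fun P : ℝ => (1 + P) ^ e) (Set.Icc 0 R) := by
      intro e
      refine ContinuousOn.rpow_const (by fun_prop) ?_
      intro x hx; left; linarith [hx.1]
    have hp : ∀ e : ℝ, 0 ≤ e → ContinuousOn (fun P : ℝ => P ^ e) (Set.Icc 0 R) :=
      fun e he => (Real.continuous_rpow_const he).continuousOn
    have h1 := hp β (by linarith)
    have h2 := hp (β - 1 / 2) (by linarith)
    have h3 := hq (s - 1 / 4)
    have h4 := hq s
    have h5 := hq (2 * s - 1 / 2)
    have h6 := hq (2 * s)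
    unfold BB
    fun_prop
  obtain ⟨M, hM⟩ := isCompact_Icc.exists_bound_of_continuousOn hcont
  refine ⟨max M 0, le_max_right _ _, fun P r hP hr hrP => ?_⟩
  by_cases hB : 0 ≤ BB α β s c ε P
  · have := mul_nonneg hr hB
    linarith [le_max_right M 0]
  · push Not at hB
    have hPR : P ≤ R := by
      by_contra h
      push Not at h
      linarith [hR P h.le]
    have h1 := hM P ⟨hP, hPR⟩
    rw [Real.norm_eq_abs] at h1
    have h2 := (abs_le.1 h1).1
    have h3 : Real.sqrt P * BB α β s c ε P ≤ r * BB α β s c ε P :=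
      mul_le_mul_of_nonpos_right hrP hB.le
    linarith [le_max_left M 0]

lemma key_pt (α β s : ℝ) (hα : 0 < α) (hs : 0 < s) (hβ : β = s + 3 / 4) :
    ∃ C : ℝ, 0 ≤ C ∧ ∀ x y t P r a1 a2 h b V1 V2 dV : ℝ, 0 < P → r = x ^ 2 + y ^ 2 →
      P = r ^ 2 + 16 * t ^ 2 →
      a1 = 4 * r * x + 64 * y * t → a2 = 4 * r * y - 64 * x * t →
      h = (1 + P) ^ (s - 1 / 4) → b = (1 + P) ^ s →
      V1 = h * a1 - b * x → V2 = h * a2 - b * y →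
      dV = (s - 1 / 4) * (1 + P) ^ (s - 1 / 4 - 1) * (a1 ^ 2 + a2 ^ 2) + 144 * h * r - 2 * b
          - s * (1 + P) ^ (s - 1) * (4 * r ^ 2) →
      2 * P ^ s - C ≤ α * β * P ^ (β - 1) * (V1 * a1 + V2 * a2) - dV
        - α * β / 64 * (V1 ^ 2 + V2 ^ 2) := by
  obtain ⟨C, hC0, hC⟩ := BB_bound α β s (256 * |s - 1 / 4| + 144) (α * β / 64) hα hs hβ rfl
  refine ⟨C, hC0, ?_⟩
  intro x y t P r a1 a2 h b V1 V2 dV hP hr hPr ha1 ha2 hh hb hV1 hV2 hdV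
  have hβ0 : 0 < β := by linarith
  have hαβ : 0 < α * β := mul_pos hα hβ0
  have hQ0 : 0 < 1 + P := by linarith
  have hr0 : 0 ≤ r := by rw [hr]; positivity
  have hrP : r ≤ Real.sqrt P := Real.le_sqrt_of_sq_le (by rw [hPr]; nlinarith [sq_nonneg t])
  have hB := hC P r hP.le hr0 hrP
  have hh0 : 0 < h := hh ▸ Real.rpow_pos_of_pos hQ0 _
  have hb0 : 0 < b := hb ▸ Real.rpow_pos_of_pos hQ0 _
  obtain ⟨G, hG⟩ : ∃ G, G = a1 ^ 2 + a2 ^ 2 := ⟨_, rfl⟩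
  rw [← hG] at hdV
  have hGe : G = 16 * r * (r ^ 2 + 256 * t ^ 2) := by rw [hG, ha1, ha2, hr]; ring
  have hG1 : 16 * r * P ≤ G := by
    rw [hGe, hPr]
    have := mul_nonneg hr0 (sq_nonneg t)
    linarith
  have hG2 : G ≤ 256 * r * P := by
    rw [hGe, hPr]
    have := mul_nonneg hr0 (sq_nonneg r)
    linarith
  have hxa : x * a1 + y * a2 = 4 * r ^ 2 := by rw [ha1, ha2, hr]; ring
  have hVa : V1 * a1 + V2 * a2 = h * G - b * (4 * r ^ 2) := by
    linear_combination a1 * hV1 + a2 * hV2 - h * hG - b * hxa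
  have hVV : V1 ^ 2 + V2 ^ 2 ≤ 2 * h ^ 2 * G + 2 * b ^ 2 * r := by
    rw [hV1, hV2, hG, hr]
    linarith [sq_nonneg (h * a1 + b * x), sq_nonneg (h * a2 + b * y)]
  have hVV2 : V1 ^ 2 + V2 ^ 2 ≤ r * (512 * h ^ 2 * P + 2 * b ^ 2) := by
    have := mul_le_mul_of_nonneg_left hG2 (by positivity : 0 ≤ 2 * h ^ 2)
    linarith
  have hPs : P ^ s ≤ b := by rw [hb]; exact Real.rpow_le_rpow hP.le (by linarith) hs.le
  -- powers
  have p1 : P ^ (β - 1) * P = P ^ β := by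
    nth_rw 2 [← Real.rpow_one P]
    rw [← Real.rpow_add hP]; congr 1; ring
  have p2 : P ^ (β - 1) * Real.sqrt P = P ^ (β - 1 / 2) := by
    rw [Real.sqrt_eq_rpow, ← Real.rpow_add hP]; congr 1; ring
  have p3 : (1 + P) ^ (s - 1 / 4 - 1) * (1 + P) = h := by
    nth_rw 2 [← Real.rpow_one (1 + P)]
    rw [hh, ← Real.rpow_add hQ0]; congr 1; ring
  have p4 : h ^ 2 = (1 + P) ^ (2 * s - 1 / 2) := by
    rw [hh, sq, ← Real.rpow_add hQ0]; congr 1; ring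
  have p5 : b ^ 2 = (1 + P) ^ (2 * s) := by
    rw [hb, sq, ← Real.rpow_add hQ0]; congr 1; ring
  have hPb : 0 < P ^ (β - 1) := Real.rpow_pos_of_pos hP _
  -- first term
  have T1 : r * (16 * P ^ β * h - 4 * P ^ (β - 1 / 2) * b) ≤ P ^ (β - 1) * (V1 * a1 + V2 * a2) := by
    rw [hVa, ← p1, ← p2]
    have h1 : 4 * b * r ^ 2 ≤ 4 * b * (r * Real.sqrt P) := by
      have := mul_le_mul_of_nonneg_left hrP hr0
      have := mul_le_mul_of_nonneg_left this hb0.le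
      linarith
    have h2 := mul_le_mul_of_nonneg_left hG1 hh0.le
    have h3 : r * (16 * P * h - 4 * Real.sqrt P * b) ≤ h * G - b * (4 * r ^ 2) := by linarith
    have := mul_le_mul_of_nonneg_left h3 hPb.le
    linarith
  have T2 : (s - 1 / 4) * (1 + P) ^ (s - 1 / 4 - 1) * G ≤ 256 * |s - 1 / 4| * h * r := by
    have hk : 0 < (1 + P) ^ (s - 1 / 4 - 1) := Real.rpow_pos_of_pos hQ0 _
    have hG0 : 0 ≤ G := by rw [hG]; positivity
    have h1 : (s - 1 / 4) * (1 + P) ^ (s - 1 / 4 - 1) * G ≤ |s - 1 / 4| * (1 + P) ^ (s - 1 / 4 - 1) * G := by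
      gcongr; exact le_abs_self _
    have h2 : G ≤ 256 * r * (1 + P) := by linarith
    have h3 : |s - 1 / 4| * (1 + P) ^ (s - 1 / 4 - 1) * G ≤
        |s - 1 / 4| * (1 + P) ^ (s - 1 / 4 - 1) * (256 * r * (1 + P)) := by gcongr
    refine h1.trans (h3.trans_eq ?_)
    rw [← p3]; ring
  have T3 : 0 ≤ s * (1 + P) ^ (s - 1) * (4 * r ^ 2) := by
    have hk : 0 < (1 + P) ^ (s - 1) := Real.rpow_pos_of_pos hQ0 _
    positivity
  have T1' := mul_le_mul_of_nonneg_left T1 hαβ.le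
  have T4 := mul_le_mul_of_nonneg_left hVV2 (by positivity : 0 ≤ α * β / 64)
  unfold BB at hB
  rw [← p4, ← p5, ← hh, ← hb] at hB
  rw [hdV]
  linarith

/-- First component of the auxiliary horizontal vector field. -/
def V1f (s : ℝ) (y : Spin3) : ℝ := (1 + KP y) ^ (s - 1 / 4) * X1 KP y - (1 + KP y) ^ s * y 0

/-- Second component of the auxiliary horizontal vector field. -/
def V2f (s : ℝ) (y : Spin3) : ℝ := (1 + KP y) ^ (s - 1 / 4) * X2 KP y - (1 + KP y) ^ s * y 1

lemma Qpow_contDiff (s : ℝ) : ContDiff ℝ 1 (fun y => (1 + KP y) ^ s) := by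
  refine ContDiff.rpow_const_of_ne ?_ (fun x => by have := KP_nonneg x; positivity)
  exact contDiff_const.add (KP_contDiff.of_le (by simp))

lemma X1KP_contDiff : ContDiff ℝ 1 (fun y => X1 KP y) := by
  simp only [X1_KP]; fun_prop

lemma X2KP_contDiff : ContDiff ℝ 1 (fun y => X2 KP y) := by
  simp only [X2_KP]; fun_prop

lemma V1f_contDiff (s : ℝ) : ContDiff ℝ 1 (V1f s) := by
  have h1 := Qpow_contDiff (s - 1 / 4)
  have h2 := Qpow_contDiff s
  have h3 := X1KP_contDiff
  unfold V1f
  fun_prop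

lemma V2f_contDiff (s : ℝ) : ContDiff ℝ 1 (V2f s) := by
  have h1 := Qpow_contDiff (s - 1 / 4)
  have h2 := Qpow_contDiff s
  have h3 := X2KP_contDiff
  unfold V2f
  fun_prop

lemma cd_diff {f : Spin3 → ℝ} (h : ContDiff ℝ 1 f) (x : Spin3) : DifferentiableAt ℝ f x :=
  h.differentiable one_ne_zero x

lemma Qpow_hasDerivAt (e : ℝ) (x : Spin3) :
    HasDerivAt (fun u : ℝ => (1 + u) ^ e) (e * (1 + KP x) ^ (e - 1)) (KP x) := by
  have h : HasDerivAt (fun u : ℝ => 1 + u) 1 (KP x) := (hasDerivAt_id _).const_add 1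
  have := h.rpow_const (p := e) (Or.inl (by have := KP_nonneg x; positivity))
  simpa using this

lemma divV (s : ℝ) (x : Spin3) : X1 (V1f s) x + X2 (V2f s) x =
    (s - 1 / 4) * (1 + KP x) ^ (s - 1 / 4 - 1) * (X1 KP x ^ 2 + X2 KP x ^ 2)
      + 144 * (1 + KP x) ^ (s - 1 / 4) * (x 0 ^ 2 + x 1 ^ 2) - 2 * (1 + KP x) ^ s
      - s * (1 + KP x) ^ (s - 1) * (4 * (x 0 ^ 2 + x 1 ^ 2) ^ 2) := by
  have h1 := cd_diff (Qpow_contDiff (s - 1 / 4)) x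
  have h2 := cd_diff (Qpow_contDiff s) x
  have h3 := cd_diff X1KP_contDiff x
  have h4 := cd_diff X2KP_contDiff x
  have c0 : DifferentiableAt ℝ (fun y : Spin3 => y 0) x := by fun_prop
  have c1 : DifferentiableAt ℝ (fun y : Spin3 => y 1) x := by fun_prop
  have e1 : X1 (V1f s) x = X1 (fun y => (1 + KP y) ^ (s - 1 / 4) * X1 KP y - (1 + KP y) ^ s * y 0) x := rfl
  have e2 : X2 (V2f s) x = X2 (fun y => (1 + KP y) ^ (s - 1 / 4) * X2 KP y - (1 + KP y) ^ s * y 1) x := rfl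
  rw [e1, e2, X1_sub (h1.fun_mul h3) (h2.fun_mul c0), X2_sub (h1.fun_mul h4) (h2.fun_mul c1),
    X1_mul h1 h3, X1_mul h2 c0, X2_mul h1 h4, X2_mul h2 c1, X1_X1_KP, X2_X2_KP, X1_c0, X2_c1,
    X1_comp (Qpow_hasDerivAt (s - 1 / 4) x) (KP_diff x), X1_comp (Qpow_hasDerivAt s x) (KP_diff x),
    X2_comp (Qpow_hasDerivAt (s - 1 / 4) x) (KP_diff x), X2_comp (Qpow_hasDerivAt s x) (KP_diff x)]
  have hxa : x 0 * X1 KP x + x 1 * X2 KP x = 4 * (x 0 ^ 2 + x 1 ^ 2) ^ 2 := by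
    rw [X1_KP, X2_KP]; ring
  linear_combination (-(s * (1 + KP x) ^ (s - 1))) * hxa

lemma KPpow_contDiff {β : ℝ} (hβ : 1 / 2 < β) : ContDiff ℝ 1 (fun y => KP y ^ β) := by
  have h1 := contDiff_norm_rpow (E := ℂ) (p := 2 * β) (by linarith)
  have h2 : ContDiff ℝ 1 (fun y : Spin3 => (((y 0 ^ 2 + y 1 ^ 2 : ℝ) : ℂ) + ((4 * y 2 : ℝ) : ℂ) * Complex.I)) := by
    have k1 : ContDiff ℝ 1 (fun y : Spin3 => y 0 ^ 2 + y 1 ^ 2) := by fun_prop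
    have k2 : ContDiff ℝ 1 (fun y : Spin3 => 4 * y 2) := by fun_prop
    exact ContDiff.add (Complex.ofRealCLM.contDiff.comp k1) (ContDiff.mul (Complex.ofRealCLM.contDiff.comp k2) contDiff_const)
  have h3 := h1.comp h2
  convert h3 using 1
  funext y
  simp only [Function.comp]
  rw [Complex.norm_add_mul_I, Real.sqrt_eq_rpow, ← Real.rpow_mul (by positivity)]
  unfold KP
  congr 1 <;> ring

lemma w_contDiff (α : ℝ) {β : ℝ} (hβ : 1 / 2 < β) :
    ContDiff ℝ 1 (fun y => Real.exp (-(α * KP y ^ β))) := by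
  have := KPpow_contDiff hβ
  fun_prop

lemma absq_contDiff {q : ℝ} (hq : 2 ≤ q) : ContDiff ℝ 1 (fun u : ℝ => |u| ^ q) := by
  simpa using contDiff_norm_rpow (E := ℝ) (p := q) (by linarith)

lemma KP_pos {x : Spin3} (hx : x ≠ 0) : 0 < KP x := by
  refine (KP_nonneg x).lt_of_ne' ?_
  intro h
  apply hx
  unfold KP at h
  have h2 : x 2 = 0 := by
    have : x 2 ^ 2 = 0 := by nlinarith [sq_nonneg (x 2), sq_nonneg (x 0 ^ 2 + x 1 ^ 2)]
    exact pow_eq_zero_iff (two_ne_zero) |>.1 this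
  have h3 : x 0 ^ 2 + x 1 ^ 2 = 0 := by
    have : (x 0 ^ 2 + x 1 ^ 2) ^ 2 = 0 := by nlinarith [sq_nonneg (x 2), sq_nonneg (x 0 ^ 2 + x 1 ^ 2)]
    exact pow_eq_zero_iff (two_ne_zero) |>.1 this
  have h0 : x 0 = 0 := by
    have : x 0 ^ 2 = 0 := by nlinarith [sq_nonneg (x 0), sq_nonneg (x 1)]
    exact pow_eq_zero_iff (two_ne_zero) |>.1 this
  have h1 : x 1 = 0 := by
    have : x 1 ^ 2 = 0 := by nlinarith [sq_nonneg (x 0), sq_nonneg (x 1)]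
    exact pow_eq_zero_iff (two_ne_zero) |>.1 this
  funext i
  fin_cases i <;> simp [h0, h1, h2]

lemma young {q u H : ℝ} (hq : 2 ≤ q) (hH : 0 ≤ H) : |u| ^ (q - 2) * H ^ 2 ≤ |u| ^ q + H ^ q := by
  have hu := abs_nonneg u
  have h2 : ∀ v : ℝ, 0 ≤ v → v ^ (q - 2) * v ^ 2 = v ^ q := by
    intro v hv
    rcases hv.eq_or_lt with h | h
    · rw [← h, Real.zero_rpow (by linarith : q ≠ 0)]; simp
    · rw [← Real.rpow_natCast, ← Real.rpow_add h]; congr 1; push_cast; ring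
  rcases le_total |u| H with h | h
  · have : |u| ^ (q - 2) * H ^ 2 ≤ H ^ (q - 2) * H ^ 2 := by gcongr
    rw [h2 H hH] at this
    have := Real.rpow_nonneg hu q
    linarith
  · have : |u| ^ (q - 2) * H ^ 2 ≤ |u| ^ (q - 2) * |u| ^ 2 := by gcongr
    rw [h2 _ hu] at this
    have := Real.rpow_nonneg hH q
    linarith

lemma abs_pow_split {q u : ℝ} (hq : 2 ≤ q) : |u| ^ (q - 2) * u ^ 2 = |u| ^ q := by
  rw [← sq_abs u]
  rcases (abs_nonneg u).eq_or_lt with h | h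
  · rw [← h, Real.zero_rpow (by linarith : q ≠ 0)]; simp
  · rw [← Real.rpow_natCast, ← Real.rpow_add h]; congr 1; push_cast; ring

lemma lint_le {A D B : Spin3 → ℝ} (hA : Integrable A) (hA0 : ∀ x, 0 ≤ A x) (hD : Integrable D)
    (hD0 : ∫ x, D x = 0) (h : ∀ᵐ x, A x + D x ≤ B x) :
    ∫⁻ x, ENNReal.ofReal (A x) ≤ ∫⁻ x, ENNReal.ofReal (B x) := by
  rw [← ofReal_integral_eq_lintegral_ofReal hA (Eventually.of_forall hA0)]
  have h1 : ∫ x, A x = ∫ x, (A x + D x) := by rw [integral_add hA hD, hD0, add_zero]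
  have hAD : Integrable (fun x => A x + D x) := hA.add hD
  have h2 : ∫ x, (A x + D x) ≤ ∫ x, max (A x + D x) 0 :=
    integral_mono hAD hAD.pos_part (fun x => le_max_left _ _)
  rw [h1]
  refine (ENNReal.ofReal_le_ofReal h2).trans ?_
  rw [ofReal_integral_eq_lintegral_ofReal hAD.pos_part (Eventually.of_forall fun x => le_max_right _ _)]
  refine lintegral_mono_ae ?_
  filter_upwards [h] with x hx
  rw [ENNReal.ofReal_max, ENNReal.ofReal_zero, max_eq_left zero_le]
  exact ENNReal.ofReal_le_ofReal hx

lemma main_cs (α β s q : ℝ) (hα : 0 < α) (hs : 0 < s) (hβ : β = s + 3 / 4) (hq : 2 ≤ q) :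
    ∃ C : ℝ, 0 < C ∧ ∀ g : Spin3 → ℝ, LocallyLipschitz g → HasCompactSupport g →
      ∫⁻ x, ENNReal.ofReal (|g x| ^ q * KP x ^ s * Real.exp (-(α * KP x ^ β))) ≤
        ENNReal.ofReal C * ∫⁻ x, ENNReal.ofReal
          ((hGrad g x ^ q + |g x| ^ q) * Real.exp (-(α * KP x ^ β))) := by
  obtain ⟨C, hC0, hC⟩ := key_pt α β s hα hs hβ
  have hβ0 : 0 < β := by linarith
  have hβ1 : 1 / 2 < β := by linarith
  have hαβ : 0 < α * β := mul_pos hα hβ0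
  obtain ⟨ε, hε⟩ : ∃ ε, ε = α * β / 64 := ⟨_, rfl⟩
  have hε0 : 0 < ε := by rw [hε]; positivity
  obtain ⟨c2, hc2⟩ : ∃ c2, c2 = q ^ 2 / (4 * ε) := ⟨_, rfl⟩
  have hc20 : 0 ≤ c2 := by rw [hc2]; positivity
  refine ⟨C + c2 + 1, by positivity, fun g hg hgc => ?_⟩
  obtain ⟨K, hK⟩ := ll_lip hg hgc
  have hq0 : q ≠ 0 := by linarith
  have hGll : LocallyLipschitz (fun x => |g x| ^ q) := (absq_contDiff hq).locallyLipschitz.comp hg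
  have hGc : HasCompactSupport (fun x => |g x| ^ q) :=
    hgc.comp_left (g := fun u : ℝ => |u| ^ q) (by simp [Real.zero_rpow hq0])
  have hw := w_contDiff α hβ1
  have hF1 : LocallyLipschitz (fun x => Real.exp (-(α * KP x ^ β)) * V1f s x * |g x| ^ q) :=
    ll_mul (ll_mul hw.locallyLipschitz (V1f_contDiff s).locallyLipschitz) hGll
  have hF2 : LocallyLipschitz (fun x => Real.exp (-(α * KP x ^ β)) * V2f s x * |g x| ^ q) :=
    ll_mul (ll_mul hw.locallyLipschitz (V2f_contDiff s).locallyLipschitz) hGll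
  have I1 := int_X1 hF1 (hasCS_mul hGc)
  have I2 := int_X2 hF2 (hasCS_mul hGc)
  have hKs : Continuous (fun x => KP x ^ s) := KP_contDiff.continuous.rpow_const (fun x => Or.inr hs.le)
  have hA : Integrable (fun x => |g x| ^ q * KP x ^ s * Real.exp (-(α * KP x ^ β))) := by
    refine Continuous.integrable_of_hasCompactSupport ?_ ?_
    · exact (hGll.continuous.mul hKs).mul hw.continuous
    · exact (hGc.mul_right).mul_right
  rw [← lintegral_const_mul' _ _ ENNReal.ofReal_ne_top]
  simp only [← ENNReal.ofReal_mul (by positivity : 0 ≤ C + c2 + 1)]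
  refine lint_le hA (fun x => ?_) (I1.1.add I2.1) (by rw [integral_add' I1.1 I2.1, I1.2, I2.2, add_zero]) ?_
  · have := KP_nonneg x; positivity
  have hne : ∀ᵐ x : Spin3, x ≠ 0 := by
    rw [ae_iff]; simp
  filter_upwards [hne, hK.ae_differentiableAt (μ := volume)] with x hx hgd
  have hP := KP_pos hx
  have hwd := cd_diff hw x
  have hV1d := cd_diff (V1f_contDiff s) x
  have hV2d := cd_diff (V2f_contDiff s) x
  have hφ := hasDerivAt_abs_rpow (g x) (p := q) (by linarith)
  have hGd : DifferentiableAt ℝ (fun x => |g x| ^ q) x :=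
    hφ.differentiableAt.comp x hgd
  have hψ : HasDerivAt (fun u : ℝ => Real.exp (-(α * u ^ β)))
      (Real.exp (-(α * KP x ^ β)) * (-(α * (β * KP x ^ (β - 1))))) (KP x) :=
    (((Real.hasDerivAt_rpow_const (Or.inl hP.ne')).const_mul α).neg).exp
  simp only [Pi.add_apply]
  rw [X1_mul (hwd.fun_mul hV1d) hGd, X1_mul hwd hV1d, X2_mul (hwd.fun_mul hV2d) hGd, X2_mul hwd hV2d,
    X1_comp hφ hgd, X2_comp hφ hgd, X1_comp hψ (KP_diff x), X2_comp hψ (KP_diff x)]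
  have hk := hC (x 0) (x 1) (x 2) (KP x) (x 0 ^ 2 + x 1 ^ 2) (X1 KP x) (X2 KP x) _ _ (V1f s x) (V2f s x)
    (X1 (V1f s) x + X2 (V2f s) x) hP rfl rfl (X1_KP x) (X2_KP x) rfl rfl rfl rfl (divV s x)
  rw [← hε] at hk
  have hdv : X1 (fun y => V1f s y) x + X2 (fun y => V2f s y) x = X1 (V1f s) x + X2 (V2f s) x := rfl
  generalize X1 (V1f s) x = d1 at *
  generalize X2 (V2f s) x = d2 at *
  generalize V1f s x = v1 at *
  generalize V2f s x = v2 at *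
  have hH : hGrad g x ^ 2 = X1 g x ^ 2 + X2 g x ^ 2 := Real.sq_sqrt (by positivity)
  have hH0 : 0 ≤ hGrad g x := Real.sqrt_nonneg _
  have hy := young (u := g x) hq hH0
  have hsp := abs_pow_split (u := g x) hq
  have hwp : 0 < Real.exp (-(α * KP x ^ β)) := Real.exp_pos _
  have hm0 : 0 ≤ |g x| ^ (q - 2) := by positivity
  have hGq0 : 0 ≤ |g x| ^ q := by positivity
  have hHq0 : 0 ≤ hGrad g x ^ q := by positivity
  have hPs0 : 0 ≤ KP x ^ s := by positivity
  have h1 : q * g x * (X1 g x * v1 + X2 g x * v2) ≤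
      ε * g x ^ 2 * (v1 ^ 2 + v2 ^ 2) + c2 * hGrad g x ^ 2 := by
    rw [hH, hc2]
    have : ε * g x ^ 2 * (v1 ^ 2 + v2 ^ 2) + q ^ 2 / (4 * ε) * (X1 g x ^ 2 + X2 g x ^ 2) -
      q * g x * (X1 g x * v1 + X2 g x * v2) =
        ((2 * ε * g x * v1 - q * X1 g x) ^ 2 + (2 * ε * g x * v2 - q * X2 g x) ^ 2) / (4 * ε) := by
      field_simp; ring
    have h3 : 0 ≤ ((2 * ε * g x * v1 - q * X1 g x) ^ 2 + (2 * ε * g x * v2 - q * X2 g x) ^ 2) / (4 * ε) := by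
      positivity
    linarith
  have h2 := mul_le_mul_of_nonneg_left h1 hm0
  have h3 := mul_le_mul_of_nonneg_left hk hGq0
  have h4 := mul_le_mul_of_nonneg_left hy hc20
  have h5 : |g x| ^ (q - 2) * (ε * g x ^ 2 * (v1 ^ 2 + v2 ^ 2) + c2 * hGrad g x ^ 2) =
      |g x| ^ q * (ε * (v1 ^ 2 + v2 ^ 2)) + c2 * (|g x| ^ (q - 2) * hGrad g x ^ 2) := by
    rw [← hsp]; ring
  have h6 : 0 ≤ C * hGrad g x ^ q + hGrad g x ^ q + |g x| ^ q := by positivity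
  have h7 : 0 ≤ |g x| ^ q * KP x ^ s := by positivity
  rw [h5] at h2
  have hfin : |g x| ^ q * KP x ^ s + (|g x| ^ (q - 2) * (q * g x * (X1 g x * v1 + X2 g x * v2))
      - |g x| ^ q * (α * β * KP x ^ (β - 1) * (v1 * X1 KP x + v2 * X2 KP x) - (d1 + d2)))
      ≤ (C + c2 + 1) * (hGrad g x ^ q + |g x| ^ q) := by linarith
  have := mul_le_mul_of_nonneg_left hfin hwp.le
  linarith

lemma KP_lower (x : Spin3) : ‖x‖ ^ 2 ≤ 1 + KP x := by
  have h : ‖x‖ ≤ Real.sqrt (1 + KP x) := by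
    rw [pi_norm_le_iff_of_nonneg (Real.sqrt_nonneg _)]
    intro i
    rw [Real.norm_eq_abs]
    refine Real.abs_le_sqrt ?_
    unfold KP
    fin_cases i <;> simp <;>
      nlinarith [sq_nonneg (x 0), sq_nonneg (x 1), sq_nonneg (x 2), sq_nonneg (x 0 ^ 2 + x 1 ^ 2 - 1)]
  have h0 : 0 ≤ 1 + KP x := by have := KP_nonneg x; positivity
  calc ‖x‖ ^ 2 ≤ Real.sqrt (1 + KP x) ^ 2 := by gcongr
    _ = _ := Real.sq_sqrt h0

lemma KP_tendsto : Tendsto KP (cocompact Spin3) atTop := by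
  have h1 : Tendsto (fun x : Spin3 => ‖x‖ ^ 2) (cocompact Spin3) atTop :=
    (tendsto_pow_atTop two_ne_zero).comp (tendsto_norm_cocompact_atTop)
  have h2 : Tendsto (fun x : Spin3 => ‖x‖ ^ 2 + (-1)) (cocompact Spin3) atTop :=
    tendsto_atTop_add_const_right _ _ h1
  exact tendsto_atTop_mono (fun x => by have := KP_lower x; linarith) h2

lemma kaplan_pow (x : Spin3) (e : ℝ) : kaplan x ^ e = KP x ^ (e / 4) := by
  have : kaplan x = KP x ^ ((1 : ℝ) / 4) := rfl
  rw [this, ← Real.rpow_mul (KP_nonneg x)]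
  congr 1; ring

lemma hGrad_mul_le {f g : Spin3 → ℝ} {x : Spin3} {M : ℝ} (hf : DifferentiableAt ℝ f x)
    (hg : DifferentiableAt ℝ g x) (hg0 : 0 ≤ g x) (hg1 : g x ≤ 1) (hM : hGrad g x ≤ M) :
    hGrad (fun y => f y * g y) x ≤ hGrad f x + M * |f x| := by
  have hM0 : 0 ≤ M := (Real.sqrt_nonneg _).trans hM
  have h0 : 0 ≤ hGrad f x := Real.sqrt_nonneg _
  have hfs : hGrad f x ^ 2 = X1 f x ^ 2 + X2 f x ^ 2 := Real.sq_sqrt (by positivity)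
  have hgs : hGrad g x ^ 2 = X1 g x ^ 2 + X2 g x ^ 2 := Real.sq_sqrt (by positivity)
  have hg0' : 0 ≤ hGrad g x := Real.sqrt_nonneg _
  have key : hGrad (fun y => f y * g y) x ≤ hGrad f x * g x + |f x| * hGrad g x := by
    unfold hGrad
    rw [X1_mul hf hg, X2_mul hf hg]
    apply Real.sqrt_le_iff.2
    change 0 ≤ hGrad f x * g x + |f x| * hGrad g x ∧ _ ≤ (hGrad f x * g x + |f x| * hGrad g x) ^ 2
    refine ⟨by positivity, ?_⟩
    have hcs : f x * (X1 f x * X1 g x + X2 f x * X2 g x) ≤ |f x| * (hGrad f x * hGrad g x) := by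
      refine (le_abs_self _).trans ?_
      rw [abs_mul]
      refine mul_le_mul_of_nonneg_left ?_ (abs_nonneg _)
      refine abs_le_of_sq_le_sq ?_ (by positivity)
      rw [mul_pow, hfs, hgs]
      nlinarith [sq_nonneg (X1 f x * X2 g x - X2 f x * X1 g x)]
    have := mul_le_mul_of_nonneg_left hcs hg0
    have e : (hGrad f x * g x + |f x| * hGrad g x) ^ 2 = hGrad f x ^ 2 * g x ^ 2 + 2 * (g x * (|f x| * (hGrad f x * hGrad g x)))
      + f x ^ 2 * hGrad g x ^ 2 := by rw [← sq_abs (f x)]; ring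
    rw [e, hfs, hgs]
    linarith
  have h1 : hGrad f x * g x ≤ hGrad f x * 1 := mul_le_mul_of_nonneg_left hg1 h0
  have h2 := mul_le_mul_of_nonneg_left hM (abs_nonneg (f x))
  linarith

lemma pow_sum_le {q a b : ℝ} (hq : 2 ≤ q) (ha : 0 ≤ a) (hb : 0 ≤ b) :
    (a + b) ^ q ≤ 2 ^ q * (a ^ q + b ^ q) := by
  have hq0 : 0 ≤ q := by linarith
  have ha' := Real.rpow_nonneg ha q
  have hb' := Real.rpow_nonneg hb q
  have h2 : (0:ℝ) ≤ 2 ^ q := by positivity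
  rcases le_total a b with h | h
  · calc (a + b) ^ q ≤ (2 * b) ^ q := Real.rpow_le_rpow (by positivity) (by linarith) hq0
      _ = 2 ^ q * b ^ q := Real.mul_rpow (by norm_num) hb
      _ ≤ _ := mul_le_mul_of_nonneg_left (by linarith) h2
  · calc (a + b) ^ q ≤ (2 * a) ^ q := Real.rpow_le_rpow (by positivity) (by linarith) hq0
      _ = 2 ^ q * a ^ q := Real.mul_rpow (by norm_num) ha
      _ ≤ _ := mul_le_mul_of_nonneg_left (by linarith) h2

/-- A bump function on the line. -/
def bmp : ContDiffBump (0 : ℝ) := ⟨1, 2, one_pos, one_lt_two⟩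

/-- The cutoff functions. -/
def chi (n : ℕ) (x : Spin3) : ℝ := bmp (Real.log (1 + KP x) / (n + 1))

lemma bmp_contDiff : ContDiff ℝ 1 (bmp : ℝ → ℝ) := bmp.contDiff

lemma log_contDiff (n : ℕ) : ContDiff ℝ 1 (fun x => Real.log (1 + KP x) / (n + 1)) := by
  refine ContDiff.div_const (ContDiff.log ?_ (fun x => by have := KP_nonneg x; positivity)) _
  exact contDiff_const.add (KP_contDiff.of_le (by simp))

lemma chi_contDiff (n : ℕ) : ContDiff ℝ 1 (chi n) := bmp_contDiff.comp (log_contDiff n)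

lemma chi_compact (n : ℕ) : HasCompactSupport (chi n) := by
  have h1 : ∀ᶠ x in cocompact Spin3, Real.exp (2 * (n + 1)) ≤ KP x :=
    KP_tendsto.eventually (eventually_ge_atTop _)
  rw [hasCompactSupport_iff_eventuallyEq]
  have h2 : ∀ᶠ x in cocompact Spin3, chi n x = 0 := by
    filter_upwards [h1] with x hx
    refine bmp.zero_of_le_dist ?_
    have h3 : 2 * ((n:ℝ) + 1) ≤ Real.log (1 + KP x) := by
      rw [Real.le_log_iff_exp_le (by have := KP_nonneg x; positivity)]
      linarith
    rw [Real.dist_eq, sub_zero]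
    refine le_trans ?_ (le_abs_self _)
    change (2:ℝ) ≤ _
    rw [le_div_iff₀ (by positivity)]
    exact h3
  exact (coclosedCompact_eq_cocompact (X := Spin3)) ▸ h2

lemma chi_one (x : Spin3) : ∃ n₀ : ℕ, ∀ n ≥ n₀, ∀ᶠ y in nhds x, chi n y = 1 := by
  obtain ⟨n₀, h⟩ := exists_nat_gt (Real.log (1 + KP x))
  refine ⟨n₀, fun n hn => ?_⟩
  have hn' : (n₀ : ℝ) ≤ n := by exact_mod_cast hn
  have hlt : Real.log (1 + KP x) / (n + 1) < 1 := by
    rw [div_lt_one (by positivity)]; linarith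
  filter_upwards [(log_contDiff n).continuous.continuousAt.eventually (gt_mem_nhds hlt)] with y hy
  refine bmp.one_of_mem_closedBall ?_
  have h0 : 0 ≤ Real.log (1 + KP y) / (n + 1) := by
    have := Real.log_nonneg (by linarith [KP_nonneg y] : 1 ≤ 1 + KP y)
    positivity
  rw [Metric.mem_closedBall, Real.dist_eq, sub_zero, abs_of_nonneg h0]
  exact hy.le

lemma chi_grad : ∃ M : ℝ, 0 ≤ M ∧ ∀ n x, hGrad (chi n) x ≤ M := by
  have hc : HasCompactSupport (deriv (bmp : ℝ → ℝ)) := bmp.hasCompactSupport.deriv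
  obtain ⟨K, hK⟩ := hc.exists_bound_of_continuous (bmp_contDiff.continuous_deriv le_rfl)
  have hK0 : 0 ≤ K := (norm_nonneg _).trans (hK 0)
  refine ⟨16 * K, by positivity, fun n x => ?_⟩
  have hQ : 0 < 1 + KP x := by have := KP_nonneg x; positivity
  have hd : HasDerivAt (fun u : ℝ => bmp (Real.log (1 + u) / (n + 1)))
      (deriv bmp (Real.log (1 + KP x) / (n + 1)) * (1 / (1 + KP x) / (n + 1))) (KP x) := by
    have h1 : HasDerivAt (fun u : ℝ => Real.log (1 + u) / (n + 1)) (1 / (1 + KP x) / (n + 1)) (KP x) :=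
      (((hasDerivAt_id (KP x)).const_add 1).log hQ.ne').div_const _
    have h2 : HasDerivAt bmp (deriv bmp (Real.log (1 + KP x) / (n + 1))) (Real.log (1 + KP x) / (n + 1)) :=
      (bmp_contDiff.differentiable one_ne_zero _).hasDerivAt
    exact HasDerivAt.comp (h₂ := (bmp : ℝ → ℝ)) (h := fun u : ℝ => Real.log (1 + u) / (n + 1)) (KP x) h2 h1
  have e1 : X1 (chi n) x = deriv bmp (Real.log (1 + KP x) / (n + 1)) * (1 / (1 + KP x) / (n + 1)) * X1 KP x :=
    X1_comp (φ := fun u : ℝ => bmp (Real.log (1 + u) / (n + 1))) (f := KP) hd (KP_diff x)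
  have e2 : X2 (chi n) x = deriv bmp (Real.log (1 + KP x) / (n + 1)) * (1 / (1 + KP x) / (n + 1)) * X2 KP x :=
    X2_comp (φ := fun u : ℝ => bmp (Real.log (1 + u) / (n + 1))) (f := KP) hd (KP_diff x)
  unfold hGrad
  rw [e1, e2]
  apply Real.sqrt_le_iff.2
  refine ⟨by positivity, ?_⟩
  have hk := hK (Real.log (1 + KP x) / (n + 1))
  rw [Real.norm_eq_abs] at hk
  generalize deriv bmp (Real.log (1 + KP x) / (n + 1)) = k at *
  have hk2 : k ^ 2 ≤ K ^ 2 := by rw [← sq_abs]; gcongr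
  have hG : X1 KP x ^ 2 + X2 KP x ^ 2 ≤ 256 * (1 + KP x) ^ 2 := by
    rw [X1_KP, X2_KP]
    obtain ⟨r, hr⟩ : ∃ r, r = x 0 ^ 2 + x 1 ^ 2 := ⟨_, rfl⟩
    have hr0 : 0 ≤ r := by rw [hr]; positivity
    have hPP : KP x = r ^ 2 + 16 * x 2 ^ 2 := by rw [hr]; rfl
    have e : (4 * (x 0 ^ 2 + x 1 ^ 2) * x 0 + 64 * x 1 * x 2) ^ 2 + (4 * (x 0 ^ 2 + x 1 ^ 2) * x 1 - 64 * x 0 * x 2) ^ 2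
      = 16 * r * (r ^ 2 + 256 * x 2 ^ 2) := by rw [hr]; ring
    rw [e]
    have h1 : r ≤ 1 + KP x := by rw [hPP]; nlinarith [sq_nonneg (r - 1), sq_nonneg (x 2)]
    have h2 : r ^ 2 + 256 * x 2 ^ 2 ≤ 16 * (1 + KP x) := by rw [hPP]; nlinarith [sq_nonneg r]
    calc 16 * r * (r ^ 2 + 256 * x 2 ^ 2) ≤ 16 * (1 + KP x) * (16 * (1 + KP x)) := by gcongr
      _ = _ := by ring
  have hn1 : 1 / (1 + KP x) / (n + 1) ≤ 1 / (1 + KP x) := by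
    apply div_le_self (by positivity); linarith [(Nat.cast_nonneg n : (0:ℝ) ≤ n)]
  have hn0 : 0 ≤ 1 / (1 + KP x) / ((n:ℝ) + 1) := by positivity
  calc (k * (1 / (1 + KP x) / (n + 1)) * X1 KP x) ^ 2 + (k * (1 / (1 + KP x) / (n + 1)) * X2 KP x) ^ 2
      = k ^ 2 * (1 / (1 + KP x) / (n + 1)) ^ 2 * (X1 KP x ^ 2 + X2 KP x ^ 2) := by ring
    _ ≤ K ^ 2 * (1 / (1 + KP x)) ^ 2 * (256 * (1 + KP x) ^ 2) := by gcongr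
    _ = (16 * K) ^ 2 := by field_simp; ring

lemma chi_nonneg (n : ℕ) (x : Spin3) : 0 ≤ chi n x := bmp.nonneg
lemma chi_le_one (n : ℕ) (x : Spin3) : chi n x ≤ 1 := bmp.le_one

lemma main_ll (α β s q : ℝ) (hα : 0 < α) (hs : 0 < s) (hβ : β = s + 3 / 4) (hq : 2 ≤ q) :
    ∃ C : ℝ, 0 < C ∧ ∀ g : Spin3 → ℝ, LocallyLipschitz g →
      ∫⁻ x, ENNReal.ofReal (|g x| ^ q * KP x ^ s * Real.exp (-(α * KP x ^ β))) ≤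
        ENNReal.ofReal C * ∫⁻ x, ENNReal.ofReal
          ((hGrad g x ^ q + |g x| ^ q) * Real.exp (-(α * KP x ^ β))) := by
  obtain ⟨C, hC0, hC⟩ := main_cs α β s q hα hs hβ hq
  obtain ⟨M, hM0, hM⟩ := chi_grad
  obtain ⟨c, hc⟩ : ∃ c : ℝ, c = 2 ^ q * (1 + M ^ q) + 1 := ⟨_, rfl⟩
  have hMq : 0 ≤ M ^ q := Real.rpow_nonneg hM0 q
  have h2q : (0:ℝ) < 2 ^ q := by positivity
  have hc0 : 0 < c := by rw [hc]; positivity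
  have hq0 : 0 ≤ q := by linarith
  refine ⟨C * c, by positivity, fun g hg => ?_⟩
  have hll : ∀ n, LocallyLipschitz (fun x => g x * chi n x) :=
    fun n => ll_mul hg (chi_contDiff n).locallyLipschitz
  have hcs : ∀ n, HasCompactSupport (fun x => g x * chi n x) := fun n => hasCS_mul (chi_compact n)
  have hgd : ∀ᵐ x : Spin3, DifferentiableAt ℝ g x := by
    have : ∀ᵐ x : Spin3, ∀ n, DifferentiableAt ℝ (fun x => g x * chi n x) x := by
      rw [ae_all_iff]
      intro n
      obtain ⟨K, hK⟩ := ll_lip (hll n) (hcs n)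
      exact hK.ae_differentiableAt
    filter_upwards [this] with x hx
    obtain ⟨n, hn⟩ := chi_one x
    refine (hx n).congr_of_eventuallyEq ?_
    filter_upwards [hn n le_rfl] with y hy
    rw [hy, mul_one]
  have hn : ∀ n, ∫⁻ x, ENNReal.ofReal (|g x * chi n x| ^ q * KP x ^ s * Real.exp (-(α * KP x ^ β))) ≤
      ENNReal.ofReal (C * c) * ∫⁻ x, ENNReal.ofReal
          ((hGrad g x ^ q + |g x| ^ q) * Real.exp (-(α * KP x ^ β))) := by
    intro n
    refine (hC _ (hll n) (hcs n)).trans ?_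
    rw [ENNReal.ofReal_mul hC0.le, mul_assoc]
    gcongr
    rw [← lintegral_const_mul' _ _ ENNReal.ofReal_ne_top]
    refine lintegral_mono_ae ?_
    filter_upwards [hgd] with x hx
    rw [← ENNReal.ofReal_mul hc0.le, ← mul_assoc]
    refine ENNReal.ofReal_le_ofReal (mul_le_mul_of_nonneg_right ?_ (Real.exp_pos _).le)
    have h1 := hGrad_mul_le hx (cd_diff (chi_contDiff n) x) (chi_nonneg n x) (chi_le_one n x) (hM n x)
    have hH0 : 0 ≤ hGrad g x := Real.sqrt_nonneg _
    have hHH : 0 ≤ hGrad (fun y => g y * chi n y) x := Real.sqrt_nonneg _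
    have h2 := Real.rpow_le_rpow hHH h1 hq0
    have h3 := pow_sum_le hq hH0 (mul_nonneg hM0 (abs_nonneg (g x)))
    rw [Real.mul_rpow hM0 (abs_nonneg _)] at h3
    have h4 : |g x * chi n x| ^ q ≤ |g x| ^ q := by
      refine Real.rpow_le_rpow (abs_nonneg _) ?_ hq0
      rw [abs_mul, abs_of_nonneg (chi_nonneg n x)]
      exact mul_le_of_le_one_right (abs_nonneg _) (chi_le_one n x)
    have h5 : 0 ≤ hGrad g x ^ q := Real.rpow_nonneg hH0 q
    have h6 : 0 ≤ |g x| ^ q := by positivity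
    have h7 : 0 ≤ 2 ^ q * M ^ q * hGrad g x ^ q := by positivity
    have h8 : 0 ≤ 2 ^ q * |g x| ^ q := by positivity
    rw [hc]
    linarith
  have hlim : ∀ x, ENNReal.ofReal (|g x| ^ q * KP x ^ s * Real.exp (-(α * KP x ^ β))) =
      liminf (fun n : ℕ => ENNReal.ofReal (|g x * chi n x| ^ q * KP x ^ s * Real.exp (-(α * KP x ^ β)))) atTop := by
    intro x
    symm
    apply Tendsto.liminf_eq
    apply tendsto_const_nhds.congr'
    obtain ⟨n₀, h⟩ := chi_one x
    filter_upwards [eventually_ge_atTop n₀] with n hn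
    rw [(h n hn).self_of_nhds, mul_one]
  simp only [hlim]
  refine (lintegral_liminf_le ?_).trans ?_
  · intro n
    have hw := w_contDiff α (by linarith : 1 / 2 < β)
    have hKs : Continuous (fun x => KP x ^ s) := KP_contDiff.continuous.rpow_const (fun x => Or.inr hs.le)
    have hG : Continuous (fun x => |g x * chi n x| ^ q) :=
      ((hll n).continuous.abs).rpow_const (fun x => Or.inr hq0)
    exact (ENNReal.continuous_ofReal.comp ((hG.mul hKs).mul hw.continuous)).measurable
  · exact liminf_le_of_frequently_le' (Frequently.of_forall hn)

/-- **Global U-bound for the Kaplan norm.** For `α > 0`, `p > 3`, `q ≥ 2` there is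
`C ∈ (0,∞)`, depending only on `α, p, q`, such that for every locally Lipschitz `g`:
`∫ |g|^q N^{p−3} e^{−αN^p} dx ≤ C ∫ (|∇g|^q + |g|^q) e^{−αN^p} dx`; moreover
`η = N^{p−3}` is continuous, nonnegative, and diverges in all directions. -/
theorem kaplan_U_bound_global (α p q : ℝ) (hα : 0 < α) (hp : 3 < p) (hq : 2 ≤ q) :
    (∃ C : ℝ, 0 < C ∧
      ∀ g : Spin3 → ℝ, LocallyLipschitz g →
        ∫⁻ x, ENNReal.ofReal
            (|g x| ^ q * kaplan x ^ (p - 3) * Real.exp (-(α * kaplan x ^ p))) ≤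
          ENNReal.ofReal C *
            ∫⁻ x, ENNReal.ofReal
              ((hGrad g x ^ q + |g x| ^ q) * Real.exp (-(α * kaplan x ^ p)))) ∧
      Continuous (fun x : Spin3 => kaplan x ^ (p - 3)) ∧
      (∀ x : Spin3, 0 ≤ kaplan x ^ (p - 3)) ∧
      Tendsto (fun x : Spin3 => kaplan x ^ (p - 3)) (cocompact Spin3) atTop := by
  have hs : 0 < (p - 3) / 4 := by linarith
  have hcont : Continuous (fun x : Spin3 => kaplan x ^ (p - 3)) := by
    simp only [kaplan_pow]
    exact KP_contDiff.continuous.rpow_const (fun x => Or.inr hs.le)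
  refine ⟨?_, hcont, fun x => ?_, ?_⟩
  · simp only [kaplan_pow]
    exact main_ll α (p / 4) ((p - 3) / 4) q hα hs (by ring) hq
  · rw [kaplan_pow]; exact Real.rpow_nonneg (KP_nonneg x) _
  · simp only [kaplan_pow]
    exact (tendsto_rpow_atTop hs).comp KP_tendsto
end
end

section
/- For every q ∈ (1,2] and all real numbers a, b one has the sub-quadratic inequality |a|^q − |b|^q ≤ sgn(b) · q · |b|^{q−1} · (a − b) + 2|a − b|^q, where sgn(b) denotes the sign of b (with sgn(0) = 0). -/
theorem aux_tangent (q : ℝ) (hq1 : 1 < q) (x y : ℝ) (hx : 0 ≤ x) (hy : 0 ≤ y) :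
    y ^ q + q * y ^ (q - 1) * (x - y) ≤ x ^ q := by
  rcases hy.eq_or_lt with rfl | hy
  · rw [Real.zero_rpow (by linarith), Real.zero_rpow (by linarith)]
    have := Real.rpow_nonneg hx q
    linarith
  · have h := one_add_mul_self_le_rpow_one_add (s := x / y - 1) (p := q)
      (by have := div_nonneg hx hy.le; linarith) hq1.le
    rw [add_sub_cancel, Real.div_rpow hx hy.le, le_div_iff₀ (Real.rpow_pos_of_pos hy q)] at h
    have e : y ^ q = y ^ (q - 1) * y := by
      rw [← Real.rpow_add_one hy.ne']; simp
    refine le_trans (le_of_eq ?_) h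
    rw [e]
    field_simp

theorem aux_mul (q : ℝ) (hq1 : 1 < q) (x : ℝ) (hx : 0 ≤ x) : x ^ q = x ^ (q - 1) * x := by
  rcases hx.eq_or_lt with rfl | hx
  · rw [Real.zero_rpow (by linarith)]; simp
  · rw [← Real.rpow_add_one hx.ne']; simp

theorem aux_pos (q : ℝ) (hq1 : 1 < q) (hq2 : q ≤ 2) (a b : ℝ) (hb : 0 < b) :
    |a| ^ q - b ^ q ≤ q * b ^ (q - 1) * (a - b) + 2 * |a - b| ^ q := by
  rcases le_total b a with hab | hab
  · have ha : 0 ≤ a := hb.le.trans hab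
    have hh : 0 ≤ a - b := by linarith
    rw [abs_of_nonneg ha, abs_of_nonneg hh, aux_mul q hq1 (a - b) hh]
    have h1 := aux_tangent q hq1 b a hb.le ha
    have h2 := Real.rpow_add_le_add_rpow hb.le hh (p := q - 1) (by linarith) (by linarith)
    rw [add_sub_cancel] at h2
    have h3 := mul_le_mul_of_nonneg_left h2 (mul_nonneg (by linarith : 0 ≤ q) hh)
    have h4 := mul_nonneg (mul_nonneg (Real.rpow_nonneg hh (q - 1)) hh) (sub_nonneg.2 hq2)
    nlinarith
  · have hh : 0 ≤ b - a := by linarith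
    rw [abs_sub_comm a b, abs_of_nonneg hh]
    rcases le_total 0 a with ha | ha
    · rw [abs_of_nonneg ha, aux_mul q hq1 (b - a) hh]
      have h1 := aux_tangent q hq1 b a hb.le ha
      have h2 := Real.rpow_add_le_add_rpow ha hh (p := q - 1) (by linarith) (by linarith)
      rw [add_sub_cancel] at h2
      have h3 := mul_le_mul_of_nonneg_left h2 (mul_nonneg (by linarith : 0 ≤ q) hh)
      have h4 := mul_nonneg (mul_nonneg (Real.rpow_nonneg hh (q - 1)) hh) (sub_nonneg.2 hq2)
      nlinarith
    · rw [abs_of_nonpos ha]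
      have h1 := aux_tangent q hq1 (b - a) b hh hb.le
      have h2 := Real.add_rpow_le_rpow_add hb.le (neg_nonneg.2 ha) hq1.le
      rw [← sub_eq_add_neg] at h2
      have e := aux_mul q hq1 b hb.le
      have h4 := mul_nonneg (Real.rpow_nonneg hb.le q) (sub_nonneg.2 hq2)
      have h5 := Real.rpow_nonneg hb.le q
      have e2 : q * b ^ q = q * b ^ (q - 1) * b := by rw [e]; ring
      nlinarith

/-- **Sub-quadratic inequality.** For every `q ∈ (1,2]` and all real `a, b`:
`|a|^q − |b|^q ≤ sgn(b)·q·|b|^{q−1}·(a−b) + 2|a−b|^q`, where `sgn(0) = 0`. -/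
theorem subquadratic_inequality (q : ℝ) (hq1 : 1 < q) (hq2 : q ≤ 2) (a b : ℝ) :
    |a| ^ q - |b| ^ q ≤
      Real.sign b * q * |b| ^ (q - 1) * (a - b) + 2 * |a - b| ^ q := by
  rcases lt_trichotomy b 0 with hb | rfl | hb
  · have h := aux_pos q hq1 hq2 (-a) (-b) (by linarith)
    rw [Real.sign_of_neg hb, abs_of_neg hb]
    rw [abs_neg, show -a - -b = -(a - b) by ring, abs_neg] at h
    linarith
  · rw [abs_zero, Real.zero_rpow (by linarith), sub_zero, sub_zero, Real.sign_zero]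
    have := Real.rpow_nonneg (abs_nonneg a) q
    linarith
  · have h := aux_pos q hq1 hq2 a b hb
    rw [Real.sign_of_pos hb, abs_of_pos hb]
    linarith
end

section
/- Let q ∈ (1,2], let μ be a probability measure on a measurable space X and let f ∈ L^q(μ). Then ∫ |f|^q dμ − |∫ f dμ|^q ≤ 2 ∫ |f − ∫ f dμ|^q dμ. -/
open MeasureTheory

theorem jgv_aux (q : ℝ) (hq1 : 1 < q) (hq2 : q ≤ 2) (t : ℝ) :
    |1 + t| ^ q ≤ 1 + q * t + 2 * |t| ^ q := by
  have split : ∀ x : ℝ, 0 ≤ x → x ^ q = x * x ^ (q - 1) := by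
    intro x hx
    rw [← Real.rpow_one_add' hx (by linarith)]
    congr 1; ring
  rcases le_total 0 t with ht | ht
  · rw [abs_of_nonneg ht, abs_of_nonneg (by linarith), split (1 + t) (by linarith), split t ht]
    have h1 : (1 + t) ^ (q - 1) ≤ 1 + (q - 1) * t :=
      rpow_one_add_le_one_add_mul_self (by linarith) (by linarith) (by linarith)
    have h2 : (1 + t) ^ (q - 1) ≤ 1 ^ (q - 1) + t ^ (q - 1) :=
      Real.rpow_add_le_add_rpow (by norm_num) ht (by linarith) (by linarith)
    rw [Real.one_rpow] at h2
    have h3 : 0 ≤ t ^ (q - 1) := Real.rpow_nonneg ht _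
    nlinarith [mul_le_mul_of_nonneg_left h2 ht, mul_nonneg ht h3]
  · rw [abs_of_nonpos ht]
    obtain ⟨s, rfl⟩ : ∃ s, t = -s := ⟨-t, by ring⟩
    rw [neg_neg]
    have hs : 0 ≤ s := by linarith
    have hsq : 0 ≤ s ^ q := Real.rpow_nonneg hs _
    rcases le_total s 1 with h | h
    · rw [abs_of_nonneg (by linarith), split (1 + -s) (by linarith)]
      have h1 : (1 + -s) ^ (q - 1) ≤ 1 + (q - 1) * (-s) :=
        rpow_one_add_le_one_add_mul_self (by linarith) (by linarith) (by linarith)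
      have h2 : s ^ (2 : ℝ) ≤ s ^ q :=
        Real.rpow_le_rpow_of_exponent_ge_of_imp hs h hq2 (by intros; linarith)
      rw [Real.rpow_two] at h2
      nlinarith [mul_le_mul_of_nonneg_left h1 (by linarith : (0:ℝ) ≤ 1 + -s),
        mul_nonneg (by linarith : 0 ≤ 2 - q) (sq_nonneg s)]
    · rw [abs_of_nonpos (by linarith)]
      have h1 : (-(1 + -s)) ^ q ≤ s ^ q :=
        Real.rpow_le_rpow (by linarith) (by linarith) (by linarith)
      have h2 : 1 + q * (s - 1) ≤ (1 + (s - 1)) ^ q :=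
        one_add_mul_self_le_rpow_one_add (by linarith) hq1.le
      rw [show 1 + (s - 1) = s by ring] at h2
      linarith

/-- For `q ∈ (1,2]`, a probability measure `μ` and `f ∈ L^q(μ)`:
`∫|f|^q dμ − |∫ f dμ|^q ≤ 2 ∫ |f − ∫ f dμ|^q dμ`. -/
theorem jensen_gap_variance (X : Type*) [MeasurableSpace X] (μ : Measure X)
    [IsProbabilityMeasure μ] (q : ℝ) (hq1 : 1 < q) (hq2 : q ≤ 2) (f : X → ℝ)
    (hf : MemLp f (ENNReal.ofReal q) μ) :
    ∫ x, |f x| ^ q ∂μ - |∫ x, f x ∂μ| ^ q ≤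
      2 * ∫ x, |f x - ∫ y, f y ∂μ| ^ q ∂μ := by
  have hint : ∀ g : X → ℝ, MemLp g (ENNReal.ofReal q) μ → Integrable (fun x => |g x| ^ q) μ := by
    intro g hg
    have := hg.integrable_norm_rpow (by simp; linarith) (by simp)
    rwa [ENNReal.toReal_ofReal (by linarith)] at this
  have hfi : Integrable f μ := hf.integrable (by
    rw [← ENNReal.ofReal_one]; exact ENNReal.ofReal_le_ofReal hq1.le)
  set m := ∫ x, f x ∂μ with hm
  have hI1 := hint f hf
  have hI2 : Integrable (fun x => |f x - m| ^ q) μ := hint _ (hf.sub (memLp_const m))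
  by_cases h0 : m = 0
  · rw [h0]
    have : 0 ≤ ∫ x, |f x| ^ q ∂μ := integral_nonneg fun x => Real.rpow_nonneg (abs_nonneg _) _
    simp only [abs_zero, sub_zero]
    rw [Real.zero_rpow (by linarith)]
    linarith
  have key : ∀ x, |f x| ^ q ≤ |m| ^ q + q * |m| ^ q / m * (f x - m) + 2 * |f x - m| ^ q := by
    intro x
    have h := mul_le_mul_of_nonneg_left (jgv_aux q hq1 hq2 ((f x - m) / m))
      (Real.rpow_nonneg (abs_nonneg m) q)
    have e1 : |m| ^ q * |1 + (f x - m) / m| ^ q = |f x| ^ q := by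
      rw [← Real.mul_rpow (abs_nonneg _) (abs_nonneg _), ← abs_mul]
      congr 2; field_simp; ring
    have e2 : |m| ^ q * |(f x - m) / m| ^ q = |f x - m| ^ q := by
      rw [← Real.mul_rpow (abs_nonneg _) (abs_nonneg _), ← abs_mul]
      congr 2; field_simp
    rw [e1] at h
    calc _ ≤ _ := h
      _ = |m| ^ q + q * |m| ^ q / m * (f x - m) + 2 * (|m| ^ q * |(f x - m) / m| ^ q) := by ring
      _ = _ := by rw [e2]
  have hA : Integrable (fun x => q * |m| ^ q / m * (f x - m)) μ :=
    (hfi.sub (integrable_const m)).const_mul _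
  have hB : Integrable (fun x => |m| ^ q + q * |m| ^ q / m * (f x - m)) μ :=
    (integrable_const _).add hA
  have hC := hI2.const_mul 2
  have := integral_mono hI1 (hB.add hC) key
  have e : ∫ x, (|m| ^ q + q * |m| ^ q / m * (f x - m) + 2 * |f x - m| ^ q) ∂μ
      = |m| ^ q + 2 * ∫ x, |f x - m| ^ q ∂μ := by
    rw [integral_add hB hC, integral_add (integrable_const _) hA, integral_const_mul,
      integral_const_mul, integral_sub hfi (integrable_const m), ← hm]
    simp
  have h3 : ∫ x, |f x| ^ q ∂μ ≤ |m| ^ q + 2 * ∫ x, |f x - m| ^ q ∂μ := by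
    rw [← e]; exact this
  linarith
end
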